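/- arXiv:2401.11786 — 5 statements merged into one kernel-verified Lean document; each statement's English description precedes it below -/
import Mathlib

section
/- For every x ∈ S₊, the Rayleigh quotient equals the auxiliary function at the projected point: Rq(x) = φ(ψ(x)). -/
open Matrix

noncomputable def Mnorm {n : ℕ} (M : Matrix (Fin n) (Fin n) ℝ) (x : Fin n → ℝ) : ℝ :=
  Real.sqrt (x ⬝ᵥ (M *ᵥ x))

noncomputable def Rq {n : ℕ} (A M : Matrix (Fin n) (Fin n) ℝ) (x : Fin n → ℝ) : ℝ :=
  (x ⬝ᵥ (A *ᵥ x)) / (x ⬝ᵥ (M *ᵥ x))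

/-- ψ(x) = QᵀMx / (qᵀMx) -/
noncomputable def psiMap {n m : ℕ} (M : Matrix (Fin n) (Fin n) ℝ) (q : Fin n → ℝ)
    (Q : Matrix (Fin n) (Fin m) ℝ) (x : Fin n → ℝ) : Fin m → ℝ :=
  (q ⬝ᵥ (M *ᵥ x))⁻¹ • ((Qᵀ * M) *ᵥ x)

/-- ψ†(y) = (Qy + q)/‖Qy + q‖_M -/
noncomputable def psiDag {n m : ℕ} (M : Matrix (Fin n) (Fin n) ℝ) (q : Fin n → ℝ)
    (Q : Matrix (Fin n) (Fin m) ℝ) (y : Fin m → ℝ) : Fin n → ℝ :=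
  (Mnorm M (Q *ᵥ y + q))⁻¹ • (Q *ᵥ y + q)

/-- The hemisphere S₊ = {x : ‖x‖_M = 1, qᵀMx > 0}. -/
def Splus {n : ℕ} (M : Matrix (Fin n) (Fin n) ℝ) (q : Fin n → ℝ) : Set (Fin n → ℝ) :=
  {x | Mnorm M x = 1 ∧ 0 < q ⬝ᵥ (M *ᵥ x)}

/-- X = {x ∈ S₊ : Rq(x) ≤ Rq(q)}. -/
def Xset {n : ℕ} (A M : Matrix (Fin n) (Fin n) ℝ) (q : Fin n → ℝ) : Set (Fin n → ℝ) :=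
  {x | x ∈ Splus M q ∧ Rq A M x ≤ Rq A M q}

/-- φ(y) = (yᵀBy + 2yᵀb + ρ)/(yᵀy + 1). -/
noncomputable def phiAux {m : ℕ} (B : Matrix (Fin m) (Fin m) ℝ) (b : Fin m → ℝ) (ρ : ℝ)
    (y : Fin m → ℝ) : ℝ :=
  (y ⬝ᵥ (B *ᵥ y) + 2 * (y ⬝ᵥ b) + ρ) / (y ⬝ᵥ y + 1)

/-!
Since `[Q, q]` is a square `M`-orthogonal matrix, every `x` with `t = qᵀMx ≠ 0` can be written
`x = t (Qy + q)` with `y = ψ(x)`. The Rayleigh quotient does not see the factor `t`, and on the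
affine hyperplane of points `Qy + q` its numerator and denominator expand to those of `φ(y)`.
-/

section BilinearAlgebra

variable {R m n : Type*} [CommSemiring R] [Fintype m] [Fintype n]

theorem dotProduct_mulVec_add_self_of_isSymm {A : Matrix n n R} (hA : A.IsSymm) (Q : Matrix n m R)
    (q : n → R) (y : m → R) :
    (Q *ᵥ y + q) ⬝ᵥ A *ᵥ (Q *ᵥ y + q) =
      y ⬝ᵥ (Qᵀ * A * Q) *ᵥ y + 2 * (y ⬝ᵥ (Qᵀ * A) *ᵥ q) + q ⬝ᵥ A *ᵥ q := by
  have adjoint (v : n → R) : Q *ᵥ y ⬝ᵥ v = y ⬝ᵥ Qᵀ *ᵥ v := by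
    rw [dotProduct_transpose_mulVec, dotProduct_comm]
  have cross : q ⬝ᵥ A *ᵥ Q *ᵥ y = y ⬝ᵥ Qᵀ *ᵥ A *ᵥ q := by
    rw [← adjoint, ← dotProduct_transpose_mulVec, hA.eq]
  simp only [← mulVec_mulVec, mulVec_add, add_dotProduct, dotProduct_add, adjoint, cross]
  ring

/-- A left inverse of the square matrix `[Q, q]` is also a right inverse, so biorthogonality
gives completeness. -/
theorem eq_mulVec_mulVec_add_dotProduct_smul [DecidableEq m]
    (hcard : Fintype.card n = Fintype.card m + 1)
    {P : Matrix m n R} {Q : Matrix n m R} {p q : n → R} (hPQ : P * Q = 1) (hPq : P *ᵥ q = 0)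
    (hpQ : p ᵥ* Q = 0) (hpq : p ⬝ᵥ q = 1) (x : n → R) :
    x = Q *ᵥ P *ᵥ x + (p ⬝ᵥ x) • q := by
  classical
  have pairing : replicateRow Unit p * replicateCol Unit q = 1 := by
    ext
    simp [hpq]
  have left_inv : fromRows P (replicateRow Unit p) * fromCols Q (replicateCol Unit q) = 1 := by
    rw [fromRows_mul_fromCols, hPQ, ← replicateCol_mulVec, hPq, ← replicateRow_vecMul, hpQ,
      pairing, replicateCol_zero, replicateRow_zero, fromBlocks_one]
  have right_inv : Q * P + replicateCol Unit q * replicateRow Unit p = 1 := by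
    rw [← fromCols_mul_fromRows]
    exact (mul_eq_one_comm_of_card_eq _ _ _ (by simp [hcard])).mp left_inv
  calc
    x = (Q * P + replicateCol Unit q * replicateRow Unit p) *ᵥ x := by rw [right_inv, one_mulVec]
    _ = Q *ᵥ P *ᵥ x + (p ⬝ᵥ x) • q := by
      rw [add_mulVec, ← mulVec_mulVec, ← vecMulVec_eq, vecMulVec_mulVec]
      simp

end BilinearAlgebra

theorem Rq_smul {n : ℕ} (A M : Matrix (Fin n) (Fin n) ℝ) {c : ℝ} (hc : c ≠ 0) (x : Fin n → ℝ) :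
    Rq A M (c • x) = Rq A M x := by
  simp only [Rq, mulVec_smul, smul_dotProduct, dotProduct_smul, smul_eq_mul]
  rw [mul_div_mul_left _ _ hc, mul_div_mul_left _ _ hc]

theorem Rq_mulVec_add_eq_phiAux {m n : ℕ} {A M : Matrix (Fin n) (Fin n) ℝ} (hA : A.IsSymm)
    (hM : M.IsSymm) {q : Fin n → ℝ} {Q : Matrix (Fin n) (Fin m) ℝ} (hq : q ⬝ᵥ M *ᵥ q = 1)
    (hQMQ : Qᵀ * M * Q = 1) (hQMq : (Qᵀ * M) *ᵥ q = 0) (y : Fin m → ℝ) :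
    Rq A M (Q *ᵥ y + q) = phiAux (Qᵀ * A * Q) ((Qᵀ * A) *ᵥ q) (Rq A M q) y := by
  have denominator : (Q *ᵥ y + q) ⬝ᵥ M *ᵥ (Q *ᵥ y + q) = y ⬝ᵥ y + 1 := by
    simp [dotProduct_mulVec_add_self_of_isSymm hM, hq, hQMQ, hQMq]
  have ρ_eq : Rq A M q = q ⬝ᵥ A *ᵥ q := by rw [Rq, hq, div_one]
  rw [Rq, phiAux, denominator, ρ_eq, dotProduct_mulVec_add_self_of_isSymm hA]

theorem eq_smul_mulVec_psiMap_add {m : ℕ} {M : Matrix (Fin (m + 1)) (Fin (m + 1)) ℝ}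
    (hM : M.IsSymm) {q : Fin (m + 1) → ℝ} {Q : Matrix (Fin (m + 1)) (Fin m) ℝ}
    (hq : q ⬝ᵥ M *ᵥ q = 1) (hQMQ : Qᵀ * M * Q = 1) (hQMq : (Qᵀ * M) *ᵥ q = 0)
    {x : Fin (m + 1) → ℝ} (hx : q ⬝ᵥ M *ᵥ x ≠ 0) :
    x = (q ⬝ᵥ M *ᵥ x) • (Q *ᵥ psiMap M q Q x + q) := by
  have hqMQ : (q ᵥ* M) ᵥ* Q = 0 := by
    rw [← mulVec_transpose, ← mulVec_transpose, hM.eq, mulVec_mulVec, hQMq]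
  have expansion : x = Q *ᵥ (Qᵀ * M) *ᵥ x + (q ⬝ᵥ M *ᵥ x) • q := by
    rw [dotProduct_mulVec] at hq ⊢
    exact eq_mulVec_mulVec_add_dotProduct_smul (by simp) hQMQ hQMq hqMQ hq x
  rwa [psiMap, mulVec_smul, smul_add, smul_inv_smul₀ hx]

theorem stmt_1_general {m : ℕ} {A M : Matrix (Fin (m + 1)) (Fin (m + 1)) ℝ} (hA : A.IsSymm)
    (hM : M.IsSymm) {q : Fin (m + 1) → ℝ} {Q : Matrix (Fin (m + 1)) (Fin m) ℝ}
    (hq : q ⬝ᵥ M *ᵥ q = 1) (hQMQ : Qᵀ * M * Q = 1) (hQMq : (Qᵀ * M) *ᵥ q = 0)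
    {x : Fin (m + 1) → ℝ} (hx : q ⬝ᵥ M *ᵥ x ≠ 0) :
    Rq A M x = phiAux (Qᵀ * A * Q) ((Qᵀ * A) *ᵥ q) (Rq A M q) (psiMap M q Q x) :=
  calc
    Rq A M x = Rq A M ((q ⬝ᵥ M *ᵥ x) • (Q *ᵥ psiMap M q Q x + q)) := by
      rw [← eq_smul_mulVec_psiMap_add hM hq hQMQ hQMq hx]
    _ = Rq A M (Q *ᵥ psiMap M q Q x + q) := Rq_smul A M hx _
    _ = phiAux (Qᵀ * A * Q) ((Qᵀ * A) *ᵥ q) (Rq A M q) (psiMap M q Q x) :=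
      Rq_mulVec_add_eq_phiAux hA hM hq hQMQ hQMq _

/-- For every x ∈ S₊, Rq(x) = φ(ψ(x)), where B = QᵀAQ, b = QᵀAq, ρ_q = Rq(q). -/
theorem stmt_1 (n : ℕ)
    (A M : Matrix (Fin (n+2)) (Fin (n+2)) ℝ)
    (hA : A.PosDef) (hM : M.PosDef)
    (q : Fin (n+2) → ℝ) (Q : Matrix (Fin (n+2)) (Fin (n+1)) ℝ)
    (hq1 : q ⬝ᵥ (M *ᵥ q) = 1)
    (hQMQ : Qᵀ * M * Q = 1)
    (hQMq : (Qᵀ * M) *ᵥ q = 0)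
    (B : Matrix (Fin (n+1)) (Fin (n+1)) ℝ) (hB : B = Qᵀ * A * Q)
    (b : Fin (n+1) → ℝ) (hb : b = (Qᵀ * A) *ᵥ q) :
    ∀ x ∈ Splus M q, Rq A M x = phiAux B b (Rq A M q) (psiMap M q Q x) := by
  subst hB hb
  exact fun x hx ↦ stmt_1_general (isHermitian_iff_isSymm.mp hA.isHermitian)
    (isHermitian_iff_isSymm.mp hM.isHermitian) hq1 hQMQ hQMq hx.2.ne'
end

section
/- Suppose λ₁ ≤ ρ_q < λ₁ + (λ₂−λ₁)/(2+χ_P), where χ_P = (8λ₂/λ₁)·(ξ_max/ξ_min)·((λ₂+λ₁)/(2(λ₂−λ₁)))^{1/2}. Then for all y ∈ Y, the Hessian of φ satisfies the Loewner-order bounds μ_P P ⪯ ∇²φ(y) ⪯ L_P P, where ∇²φ(y) = (2/(yᵀy+1))·(B − φ(y)I − y(∇φ(y))ᵀ − ∇φ(y)yᵀ), ∇φ(y) = (2/(yᵀy+1))·(By − φ(y)y + b), μ_P = 2ξ_min·(1 − 4(ρ_q−λ₁)/(λ₂−λ₁))·(1 − λ₁/λ₂ − (2+χ_P)(ρ_q−λ₁)/λ₂)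 > 0, and L_P = 2ξ_max·(1 − λ₁/λₙ + (χ_P/λ₂)(ξ_min/ξ_max)(ρ_q−λ₁)). -/
open Matrix

/-- ∇φ(y) = (2/(yᵀy+1))(By − φ(y)y + b). -/
noncomputable def gradPhi {m : ℕ} (B : Matrix (Fin m) (Fin m) ℝ) (b : Fin m → ℝ) (ρ : ℝ)
    (y : Fin m → ℝ) : Fin m → ℝ :=
  (2 / (y ⬝ᵥ y + 1)) • (B *ᵥ y - phiAux B b ρ y • y + b)

/-- ∇²φ(y) = (2/(yᵀy+1))(B − φ(y)I − y∇φ(y)ᵀ − ∇φ(y)yᵀ). -/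
noncomputable def hessPhi {m : ℕ} (B : Matrix (Fin m) (Fin m) ℝ) (b : Fin m → ℝ) (ρ : ℝ)
    (y : Fin m → ℝ) : Matrix (Fin m) (Fin m) ℝ :=
  (2 / (y ⬝ᵥ y + 1)) •
    (B - phiAux B b ρ y • (1 : Matrix (Fin m) (Fin m) ℝ)
      - vecMulVec y (gradPhi B b ρ y) - vecMulVec (gradPhi B b ρ y) y)

/-!
Everything happens in the Loewner order. If `P = Lᴴ L`, congruence by `L⁻¹` turns a pencil `(C, P)`
into a Hermitian matrix, so the extreme eigenvalues of `(B, P)` give `ξ_min P ⪯ B ⪯ ξ_max P`, and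
it is enough to compare `∇²φ(y)` with `B`.

Write `z = Q y + q`. Then `φ(y)` is the Rayleigh quotient of `z`, `yᵀy + 1 = ‖z‖_M²`, and `y ∈ Y`
only matters through `φ(y) ≤ ρ_q`. Three estimates give the two bounds.

* The Rayleigh quotients of two `M`-orthogonal vectors add up to at least `λ₁ + λ₂`; one of them
  being `q`, this yields `B ⪰ (λ₁ + λ₂ - ρ_q) I`, which controls `B - φ(y) I` from below. From
  above, `B ⪯ λₙ I` is enough.
* A vector whose Rayleigh quotient is at most `ρ_q` makes a small angle with the line of `u₁`. This
  applies to `q` and to `z`, so the angle between them is small, and its cosine is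
  `(yᵀy + 1)^(-1/2)`.
* `∇φ(y)` is a multiple of `Qᵀ (A z - φ(y) M z)`, and the residual of a Rayleigh quotient is
  controlled in the norm dual to the `A`-norm by `φ(y) (φ(y) - λ₁) / λ₁`. Together with the bound
  on `y` this makes the rank-two part of the Hessian small relative to `B`.
-/

section Pencil

open scoped ComplexOrder MatrixOrder

variable {ι 𝕜 : Type*} [Fintype ι] [RCLike 𝕜] {B P : Matrix ι ι 𝕜} {ξ : ℝ}

/-- The real eigenvalues of the pencil `(B, P)`. -/
def pencilSpectrum (B P : Matrix ι ι 𝕜) : Set ℝ :=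
  {ξ | ∃ v : ι → 𝕜, v ≠ 0 ∧ B *ᵥ v = ξ • P *ᵥ v}

theorem posSemidef_of_pencilSpectrum_nonneg (hB : B.IsHermitian) (hP : P.PosDef)
    (h : ∀ η ∈ pencilSpectrum B P, 0 ≤ η) : B.PosSemidef := by
  classical
  obtain ⟨L, hL, rfl⟩ := CStarAlgebra.isStrictlyPositive_iff_eq_star_mul_self.mp
    hP.isStrictlyPositive
  have hLdet : IsUnit L.det := (isUnit_iff_isUnit_det L).mp hL
  have hLL : Lᴴ * (L⁻¹)ᴴ = 1 := by
    rw [← conjTranspose_mul, nonsing_inv_mul _ hLdet, conjTranspose_one]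
  set C := (L⁻¹)ᴴ * B * L⁻¹ with hC
  have hBC : B * L⁻¹ = Lᴴ * C := by
    rw [hC, Matrix.mul_assoc (L⁻¹)ᴴ, ← Matrix.mul_assoc, hLL, Matrix.one_mul]
  have hCherm : C.IsHermitian := isHermitian_conjTranspose_mul_mul _ hB
  have hCpsd : C.PosSemidef := hCherm.posSemidef_iff_eigenvalues_nonneg.mpr fun i ↦ by
    set w := (hCherm.eigenvectorBasis i).ofLp with hw
    have hLw : L *ᵥ (L⁻¹ *ᵥ w) = w := by
      rw [mulVec_mulVec, mul_nonsing_inv _ hLdet, one_mulVec]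
    refine h _ ⟨L⁻¹ *ᵥ w, fun h0 ↦ ?_, ?_⟩
    · rw [h0, mulVec_zero] at hLw
      exact hCherm.eigenvectorBasis.orthonormal.ne_zero i ((WithLp.ofLp_eq_zero 2).mp hLw.symm)
    · rw [mulVec_mulVec, hBC, ← mulVec_mulVec, hw, hCherm.mulVec_eigenvectorBasis, mulVec_smul,
        ← hw, star_eq_conjTranspose, ← mulVec_mulVec, hLw]
  have hBL : B = Lᴴ * C * L := by
    rw [← hBC, nonsing_inv_mul_cancel_right _ _ hLdet]
  exact hBL ▸ hCpsd.conjTranspose_mul_mul_same L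

theorem smul_le_of_mem_lowerBounds_pencilSpectrum (hB : B.IsHermitian) (hP : P.PosDef)
    (hξ : ξ ∈ lowerBounds (pencilSpectrum B P)) : ξ • P ≤ B := by
  refine posSemidef_of_pencilSpectrum_nonneg
    (hB.sub (hP.isHermitian.smul (IsSelfAdjoint.all ξ))) hP fun η ⟨v, hv, hBv⟩ ↦ ?_
  have hmem : η + ξ ∈ pencilSpectrum B P := ⟨v, hv, by
    rw [add_smul, ← hBv, sub_mulVec, smul_mulVec, sub_add_cancel]⟩
  linarith [hξ hmem]

theorem le_smul_of_mem_upperBounds_pencilSpectrum (hB : B.IsHermitian) (hP : P.PosDef)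
    (hξ : ξ ∈ upperBounds (pencilSpectrum B P)) : B ≤ ξ • P := by
  refine posSemidef_of_pencilSpectrum_nonneg
    ((hP.isHermitian.smul (IsSelfAdjoint.all ξ)).sub hB) hP fun η ⟨v, hv, hBv⟩ ↦ ?_
  have hmem : ξ - η ∈ pencilSpectrum B P := ⟨v, hv, by
    rw [sub_smul, ← hBv, sub_mulVec, smul_mulVec, sub_sub_cancel]⟩
  linarith [hξ hmem]

theorem pos_of_mem_pencilSpectrum (hB : B.PosDef) (hP : P.PosDef)
    (hξ : ξ ∈ pencilSpectrum B P) : 0 < ξ := by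
  obtain ⟨v, hv, hBv⟩ := hξ
  have hBpos := hB.re_dotProduct_pos hv
  rw [hBv, dotProduct_smul, RCLike.smul_re] at hBpos
  exact pos_of_mul_pos_left hBpos (hP.re_dotProduct_pos hv).le

theorem le_of_forall_dotProduct_mulVec_le {B C : Matrix ι ι ℝ} (hB : B.IsHermitian)
    (hC : C.IsHermitian) (h : ∀ v, v ⬝ᵥ B *ᵥ v ≤ v ⬝ᵥ C *ᵥ v) : B ≤ C := by
  refine .of_dotProduct_mulVec_nonneg (hC.sub hB) fun v ↦ ?_
  rw [star_trivial, sub_mulVec, dotProduct_sub]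
  exact sub_nonneg.mpr (h v)

end Pencil

section Eigenbasis

variable {ι : Type*} [Fintype ι] [DecidableEq ι]

/-- `u` is an `M`-orthonormal basis of eigenvectors of the pencil `(A, M)`, and `lam` lists the
eigenvalues. -/
structure IsPencilEigenbasis (A M : Matrix ι ι ℝ) (lam : ι → ℝ) (u : ι → ι → ℝ) : Prop where
  mulVec_eq : ∀ i, A *ᵥ u i = lam i • M *ᵥ u i
  orthonormal : ∀ i j, u i ⬝ᵥ M *ᵥ u j = if i = j then 1 else 0

namespace IsPencilEigenbasis

variable {A M : Matrix ι ι ℝ} {lam : ι → ℝ} {u : ι → ι → ℝ}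

theorem of_mul_mul_transpose (h : IsPencilEigenbasis A M lam u) :
    of u * M * (of u)ᵀ = 1 := by
  ext i j
  rw [Matrix.mul_assoc, one_apply, ← h.orthonormal i j]
  rfl

theorem transpose_mul_of_mul (h : IsPencilEigenbasis A M lam u) : (of u)ᵀ * (of u * M) = 1 :=
  mul_eq_one_comm.mp h.of_mul_mul_transpose

theorem eq_transpose_mul_self (h : IsPencilEigenbasis A M lam u) :
    M = (of u * M)ᵀ * (of u * M) := by
  have hMt : (of u * M)ᵀ * (of u * M) = Mᵀ := by
    rw [transpose_mul, Matrix.mul_assoc, h.transpose_mul_of_mul, Matrix.mul_one]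
  have hsymm := isSymm_transpose_mul_self (of u * M)
  rw [hMt] at hsymm ⊢
  exact hsymm

theorem isSymm_right (h : IsPencilEigenbasis A M lam u) : M.IsSymm := by
  rw [h.eq_transpose_mul_self]
  exact isSymm_transpose_mul_self _

theorem eq_transpose_mul_diagonal_mul (h : IsPencilEigenbasis A M lam u) :
    A = (of u * M)ᵀ * diagonal lam * (of u * M) := by
  have hAu : A * (of u)ᵀ = M * (of u)ᵀ * diagonal lam := by
    ext k i
    rw [mul_diagonal, mul_comm]
    exact congrFun (h.mulVec_eq i) k
  rw [transpose_mul, h.isSymm_right.eq, ← hAu, Matrix.mul_assoc, h.transpose_mul_of_mul,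
    Matrix.mul_one]

theorem isSymm_left (h : IsPencilEigenbasis A M lam u) : A.IsSymm := by
  rw [IsSymm, h.eq_transpose_mul_diagonal_mul]
  simp only [transpose_mul, transpose_transpose, diagonal_transpose, Matrix.mul_assoc]

theorem dotProduct_mulVec_right (h : IsPencilEigenbasis A M lam u) (x z : ι → ℝ) :
    x ⬝ᵥ M *ᵥ z = ∑ i, (u i ⬝ᵥ M *ᵥ x) * (u i ⬝ᵥ M *ᵥ z) := by
  conv_lhs => rw [h.eq_transpose_mul_self, ← mulVec_mulVec, dotProduct_transpose_mulVec,
    dotProduct_comm, ← mulVec_mulVec, ← mulVec_mulVec]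
  rfl

theorem dotProduct_mulVec_left (h : IsPencilEigenbasis A M lam u) (x z : ι → ℝ) :
    x ⬝ᵥ A *ᵥ z = ∑ i, lam i * ((u i ⬝ᵥ M *ᵥ x) * (u i ⬝ᵥ M *ᵥ z)) := by
  conv_lhs => rw [h.eq_transpose_mul_diagonal_mul, Matrix.mul_assoc, ← mulVec_mulVec,
    dotProduct_transpose_mulVec, dotProduct_comm, ← mulVec_mulVec, ← mulVec_mulVec,
    ← mulVec_mulVec]
  refine Finset.sum_congr rfl fun i _ ↦ ?_
  rw [mulVec_diagonal, mul_left_comm]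
  rfl

theorem dotProduct_mulVec_self_right (h : IsPencilEigenbasis A M lam u) (x : ι → ℝ) :
    x ⬝ᵥ M *ᵥ x = ∑ i, (u i ⬝ᵥ M *ᵥ x) ^ 2 := by
  simp only [h.dotProduct_mulVec_right x x, sq]

theorem dotProduct_mulVec_self_left (h : IsPencilEigenbasis A M lam u) (x : ι → ℝ) :
    x ⬝ᵥ A *ᵥ x = ∑ i, lam i * (u i ⬝ᵥ M *ᵥ x) ^ 2 := by
  simp only [h.dotProduct_mulVec_left x x, sq]

theorem dotProduct_mulVec_self_nonneg (h : IsPencilEigenbasis A M lam u) (x : ι → ℝ) :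
    0 ≤ x ⬝ᵥ M *ᵥ x := by
  rw [h.dotProduct_mulVec_self_right]
  positivity

theorem sq_dotProduct_mulVec_le (h : IsPencilEigenbasis A M lam u) (i : ι) (x : ι → ℝ) :
    (u i ⬝ᵥ M *ᵥ x) ^ 2 ≤ x ⬝ᵥ M *ᵥ x := by
  rw [h.dotProduct_mulVec_self_right]
  exact Finset.single_le_sum (fun j _ ↦ sq_nonneg (u j ⬝ᵥ M *ᵥ x)) (Finset.mem_univ i)

theorem mul_le_dotProduct_mulVec {l : ℝ} (h : IsPencilEigenbasis A M lam u) (hl : ∀ i, l ≤ lam i)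
    (x : ι → ℝ) : l * (x ⬝ᵥ M *ᵥ x) ≤ x ⬝ᵥ A *ᵥ x := by
  rw [h.dotProduct_mulVec_self_left, h.dotProduct_mulVec_self_right, Finset.mul_sum]
  gcongr with i
  exact hl i

theorem dotProduct_mulVec_le_mul {L : ℝ} (h : IsPencilEigenbasis A M lam u) (hL : ∀ i, lam i ≤ L)
    (x : ι → ℝ) : x ⬝ᵥ A *ᵥ x ≤ L * (x ⬝ᵥ M *ᵥ x) := by
  rw [h.dotProduct_mulVec_self_left, h.dotProduct_mulVec_self_right, Finset.mul_sum]
  gcongr with i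
  exact hL i

theorem mul_sub_mul_sq_le_dotProduct_mulVec {μ : ℝ} {i₀ : ι} (h : IsPencilEigenbasis A M lam u)
    (hμ : ∀ i ≠ i₀, μ ≤ lam i) (x : ι → ℝ) :
    μ * (x ⬝ᵥ M *ᵥ x) - (μ - lam i₀) * (u i₀ ⬝ᵥ M *ᵥ x) ^ 2 ≤ x ⬝ᵥ A *ᵥ x := by
  rw [h.dotProduct_mulVec_self_left, h.dotProduct_mulVec_self_right,
    ← Finset.add_sum_erase _ (fun i ↦ (u i ⬝ᵥ M *ᵥ x) ^ 2) (Finset.mem_univ i₀),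
    ← Finset.add_sum_erase _ (fun i ↦ lam i * (u i ⬝ᵥ M *ᵥ x) ^ 2) (Finset.mem_univ i₀)]
  have htail : μ * ∑ i ∈ Finset.univ.erase i₀, (u i ⬝ᵥ M *ᵥ x) ^ 2 ≤
      ∑ i ∈ Finset.univ.erase i₀, lam i * (u i ⬝ᵥ M *ᵥ x) ^ 2 := by
    rw [Finset.mul_sum]
    exact Finset.sum_le_sum fun i hi ↦
      mul_le_mul_of_nonneg_right (hμ i (Finset.ne_of_mem_erase hi)) (sq_nonneg _)
  linarith

/-- Cauchy–Schwarz on the `M`-orthogonal complement of `u i₀`. -/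
theorem sq_dotProduct_mulVec_sub_le (h : IsPencilEigenbasis A M lam u) (i₀ : ι) (x z : ι → ℝ) :
    (x ⬝ᵥ M *ᵥ z - (u i₀ ⬝ᵥ M *ᵥ x) * (u i₀ ⬝ᵥ M *ᵥ z)) ^ 2 ≤
      (x ⬝ᵥ M *ᵥ x - (u i₀ ⬝ᵥ M *ᵥ x) ^ 2) * (z ⬝ᵥ M *ᵥ z - (u i₀ ⬝ᵥ M *ᵥ z) ^ 2) := by
  rw [h.dotProduct_mulVec_right x z, h.dotProduct_mulVec_self_right x,
    h.dotProduct_mulVec_self_right z]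
  simp only [← Finset.sum_erase_eq_sub (Finset.mem_univ i₀)]
  exact Finset.sum_mul_sq_le_sq_mul_sq ..

/-- The squared norm of the residual `A x - φ M x` of a Rayleigh quotient `φ`, in the norm dual to
the `A`-norm. -/
theorem sum_sq_sub_div_mul_sq_le {l φ : ℝ} (h : IsPencilEigenbasis A M lam u) (hl0 : 0 < l)
    (hl : ∀ i, l ≤ lam i) {x : ι → ℝ} (hx : x ⬝ᵥ A *ᵥ x = φ * (x ⬝ᵥ M *ᵥ x)) :
    ∑ i, (lam i - φ) ^ 2 / lam i * (u i ⬝ᵥ M *ᵥ x) ^ 2 ≤ φ * (φ - l) / l * (x ⬝ᵥ M *ᵥ x) := by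
  have hterm : ∀ i, (lam i - φ) ^ 2 / lam i * (u i ⬝ᵥ M *ᵥ x) ^ 2 ≤
      lam i * (u i ⬝ᵥ M *ᵥ x) ^ 2 + (φ ^ 2 / l - 2 * φ) * (u i ⬝ᵥ M *ᵥ x) ^ 2 := fun i ↦ by
    have hi : (lam i - φ) ^ 2 / lam i = lam i + (φ ^ 2 / lam i - 2 * φ) := by
      have := (hl0.trans_le (hl i)).ne'
      field_simp
      ring
    rw [hi, ← add_mul]
    gcongr
    exact hl i
  refine (Finset.sum_le_sum fun i _ ↦ hterm i).trans_eq ?_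
  rw [Finset.sum_add_distrib, ← Finset.mul_sum, ← h.dotProduct_mulVec_self_left,
    ← h.dotProduct_mulVec_self_right, hx]
  field_simp
  ring

theorem sq_dotProduct_residual_le {l φ : ℝ} (h : IsPencilEigenbasis A M lam u) (hl0 : 0 < l)
    (hl : ∀ i, l ≤ lam i) {x : ι → ℝ} (hx : x ⬝ᵥ A *ᵥ x = φ * (x ⬝ᵥ M *ᵥ x)) (a : ι → ℝ) :
    (a ⬝ᵥ A *ᵥ x - φ * (a ⬝ᵥ M *ᵥ x)) ^ 2 ≤
      (a ⬝ᵥ A *ᵥ a) * (φ * (φ - l) / l * (x ⬝ᵥ M *ᵥ x)) := by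
  have hlam : ∀ i, 0 < lam i := fun i ↦ hl0.trans_le (hl i)
  set α : ι → ℝ := fun i ↦ u i ⬝ᵥ M *ᵥ a
  set β : ι → ℝ := fun i ↦ u i ⬝ᵥ M *ᵥ x
  have hres : a ⬝ᵥ A *ᵥ x - φ * (a ⬝ᵥ M *ᵥ x) = ∑ i, (lam i - φ) * (α i * β i) := by
    rw [h.dotProduct_mulVec_left a x, h.dotProduct_mulVec_right a x, Finset.mul_sum,
      ← Finset.sum_sub_distrib]
    simp only [sub_mul, α, β]
  have hnonneg : 0 ≤ a ⬝ᵥ A *ᵥ a := by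
    rw [h.dotProduct_mulVec_self_left]
    exact Finset.sum_nonneg fun i _ ↦ mul_nonneg (hlam i).le (sq_nonneg _)
  calc (a ⬝ᵥ A *ᵥ x - φ * (a ⬝ᵥ M *ᵥ x)) ^ 2
      ≤ (∑ i, lam i * α i ^ 2) * ∑ i, (lam i - φ) ^ 2 / lam i * β i ^ 2 := by
        rw [hres]
        refine Finset.sum_sq_le_sum_mul_sum_of_sq_le_mul _
          (fun i _ ↦ mul_nonneg (hlam i).le (sq_nonneg _))
          (fun i _ ↦ mul_nonneg (div_nonneg (sq_nonneg _) (hlam i).le) (sq_nonneg _)) fun i _ ↦ ?_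
        have := (hlam i).ne'
        field_simp
        rfl
    _ ≤ (a ⬝ᵥ A *ᵥ a) * (φ * (φ - l) / l * (x ⬝ᵥ M *ᵥ x)) := by
        rw [← h.dotProduct_mulVec_self_left]
        exact mul_le_mul_of_nonneg_left (h.sum_sq_sub_div_mul_sq_le hl0 hl hx) hnonneg

/-- The Rayleigh quotients of two `M`-orthogonal vectors add up to at least `lam i₀ + μ`, the least
trace of a two-dimensional compression. -/
theorem mul_le_dotProduct_mulVec_of_orthogonal {μ : ℝ} {i₀ : ι}
    (h : IsPencilEigenbasis A M lam u) (hgap : lam i₀ ≤ μ) (hμ : ∀ i ≠ i₀, μ ≤ lam i)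
    {a c : ι → ℝ} (hac : a ⬝ᵥ M *ᵥ c = 0) (hc : c ⬝ᵥ M *ᵥ c = 1) :
    (lam i₀ + μ - c ⬝ᵥ A *ᵥ c) * (a ⬝ᵥ M *ᵥ a) ≤ a ⬝ᵥ A *ᵥ a := by
  have ha := h.mul_sub_mul_sq_le_dotProduct_mulVec hμ a
  have hcgap := h.mul_sub_mul_sq_le_dotProduct_mulVec hμ c
  have hcs := h.sq_dotProduct_mulVec_sub_le i₀ a c
  rw [hac, hc] at hcs
  rw [hc] at hcgap
  set α := u i₀ ⬝ᵥ M *ᵥ a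
  set γ := u i₀ ⬝ᵥ M *ᵥ c
  set s := a ⬝ᵥ M *ᵥ a
  have hbessel : s * γ ^ 2 ≤ s - α ^ 2 := by linarith
  calc (lam i₀ + μ - c ⬝ᵥ A *ᵥ c) * s
      ≤ (lam i₀ + (μ - lam i₀) * γ ^ 2) * s :=
        mul_le_mul_of_nonneg_right (by linarith) (h.dotProduct_mulVec_self_nonneg a)
    _ = lam i₀ * s + (μ - lam i₀) * (s * γ ^ 2) := by ring
    _ ≤ lam i₀ * s + (μ - lam i₀) * (s - α ^ 2) := by gcongr
    _ ≤ a ⬝ᵥ A *ᵥ a := by linarith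

theorem one_sub_mul_le_sq_dotProduct_mulVec {μ ρ : ℝ} {i₀ : ι} (h : IsPencilEigenbasis A M lam u)
    (hgap : lam i₀ < μ) (hμ : ∀ i ≠ i₀, μ ≤ lam i) {x : ι → ℝ}
    (hx : x ⬝ᵥ A *ᵥ x ≤ ρ * (x ⬝ᵥ M *ᵥ x)) :
    (1 - (ρ - lam i₀) / (μ - lam i₀)) * (x ⬝ᵥ M *ᵥ x) ≤ (u i₀ ⬝ᵥ M *ᵥ x) ^ 2 := by
  have hx' := (h.mul_sub_mul_sq_le_dotProduct_mulVec hμ x).trans hx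
  have hδ : 1 - (ρ - lam i₀) / (μ - lam i₀) = (μ - ρ) / (μ - lam i₀) := by
    rw [one_sub_div (sub_pos.mpr hgap).ne', sub_sub_sub_cancel_right]
  rw [hδ, div_mul_eq_mul_div, div_le_iff₀ (sub_pos.mpr hgap)]
  linarith

/-- Two vectors within an angle `arcsin √δ` of the line of `u i₀` are within twice that angle of
each other's lines. -/
theorem sq_mul_le_sq_dotProduct_mulVec_of_aligned {δ : ℝ} {i₀ : ι}
    (h : IsPencilEigenbasis A M lam u) (hδ0 : 0 ≤ δ) (hδ : 2 * δ ≤ 1) {x z : ι → ℝ}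
    (hx : (1 - δ) * (x ⬝ᵥ M *ᵥ x) ≤ (u i₀ ⬝ᵥ M *ᵥ x) ^ 2)
    (hz : (1 - δ) * (z ⬝ᵥ M *ᵥ z) ≤ (u i₀ ⬝ᵥ M *ᵥ z) ^ 2) :
    (1 - 2 * δ) ^ 2 * ((x ⬝ᵥ M *ᵥ x) * (z ⬝ᵥ M *ᵥ z)) ≤ (x ⬝ᵥ M *ᵥ z) ^ 2 := by
  have hcs := h.sq_dotProduct_mulVec_sub_le i₀ x z
  have hxN := h.dotProduct_mulVec_self_nonneg x
  have hzN := h.dotProduct_mulVec_self_nonneg z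
  have hztail := h.sq_dotProduct_mulVec_le i₀ z
  set d := x ⬝ᵥ M *ᵥ z
  set p := (u i₀ ⬝ᵥ M *ᵥ x) * (u i₀ ⬝ᵥ M *ᵥ z)
  set X := x ⬝ᵥ M *ᵥ x
  set Z := z ⬝ᵥ M *ᵥ z
  have hS : √(X * Z) ^ 2 = X * Z := Real.sq_sqrt (mul_nonneg hxN hzN)
  have hproj : (1 - δ) * √(X * Z) ≤ |p| := by
    refine le_of_abs_le (sq_le_sq.mp ?_)
    calc ((1 - δ) * √(X * Z)) ^ 2 = ((1 - δ) * X) * ((1 - δ) * Z) := by rw [mul_pow, hS]; ring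
      _ ≤ (u i₀ ⬝ᵥ M *ᵥ x) ^ 2 * (u i₀ ⬝ᵥ M *ᵥ z) ^ 2 :=
        mul_le_mul hx hz (mul_nonneg (by linarith) hzN) (sq_nonneg _)
      _ = p ^ 2 := (mul_pow _ _ 2).symm
  have htail : |p - d| ≤ δ * √(X * Z) := by
    refine abs_le_of_sq_le_sq ?_ (mul_nonneg hδ0 (Real.sqrt_nonneg _))
    calc (p - d) ^ 2 = (d - p) ^ 2 := sub_sq_comm p d
      _ ≤ (X - (u i₀ ⬝ᵥ M *ᵥ x) ^ 2) * (Z - (u i₀ ⬝ᵥ M *ᵥ z) ^ 2) := hcs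
      _ ≤ (δ * X) * (δ * Z) :=
        mul_le_mul (by linarith) (by linarith) (by linarith) (mul_nonneg hδ0 hxN)
      _ = (δ * √(X * Z)) ^ 2 := by rw [mul_pow, hS]; ring
  have hd : (1 - 2 * δ) * √(X * Z) ≤ |d| := by
    linarith [abs_sub_abs_le_abs_sub p d]
  calc (1 - 2 * δ) ^ 2 * (X * Z) = ((1 - 2 * δ) * √(X * Z)) ^ 2 := by rw [mul_pow, hS]
    _ ≤ |d| ^ 2 := pow_le_pow_left₀ (mul_nonneg (by linarith) (Real.sqrt_nonneg _)) hd 2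
    _ = d ^ 2 := sq_abs d

end IsPencilEigenbasis

end Eigenbasis

section BlockForm

variable {ι κ : Type*} [Fintype ι] [DecidableEq κ]

/-- The columns of `[q, Q]` are `M`-orthonormal, and `[q, Q]ᵀ A [q, Q]` has the blocks `ρ`, `b`,
`bᵀ`, `B`. -/
structure IsBlockForm (A M : Matrix ι ι ℝ) (q : ι → ℝ) (Q : Matrix ι κ ℝ) (B : Matrix κ κ ℝ)
    (b : κ → ℝ) (ρ : ℝ) : Prop where
  normalized : q ⬝ᵥ M *ᵥ q = 1
  orthonormal : Qᵀ * M * Q = 1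
  orthogonal : (Qᵀ * M) *ᵥ q = 0
  block_eq : B = Qᵀ * A * Q
  offDiag_eq : b = (Qᵀ * A) *ᵥ q
  corner_eq : ρ = q ⬝ᵥ A *ᵥ q

namespace IsBlockForm

variable {A M : Matrix ι ι ℝ} {q : ι → ℝ} {Q : Matrix ι κ ℝ} {B : Matrix κ κ ℝ} {b : κ → ℝ} {ρ : ℝ}

theorem right (h : IsBlockForm A M q Q B b ρ) : IsBlockForm M M q Q 1 0 1 :=
  ⟨h.normalized, h.orthonormal, h.orthogonal, h.orthonormal.symm, h.orthogonal.symm,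
    h.normalized.symm⟩

theorem isSymm_block (h : IsBlockForm A M q Q B b ρ) (hA : A.IsSymm) : B.IsSymm := by
  rw [IsSymm, h.block_eq, transpose_mul, transpose_mul, transpose_transpose, hA.eq,
    Matrix.mul_assoc]

theorem posDef_block [Finite κ] (h : IsBlockForm A M q Q B b ρ) (hA : A.PosDef) : B.PosDef := by
  cases nonempty_fintype κ
  rw [h.block_eq]
  refine hA.conjTranspose_mul_mul_same fun v w hvw ↦ ?_
  calc v = (Qᵀ * M) *ᵥ (Q *ᵥ v) := by rw [mulVec_mulVec, h.orthonormal, one_mulVec]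
    _ = (Qᵀ * M) *ᵥ (Q *ᵥ w) := congrArg _ hvw
    _ = w := by rw [mulVec_mulVec, h.orthonormal, one_mulVec]

variable [Fintype κ]

theorem mulVec_dotProduct_mulVec (h : IsBlockForm A M q Q B b ρ) (v w : κ → ℝ) :
    (Q *ᵥ v) ⬝ᵥ A *ᵥ (Q *ᵥ w) = v ⬝ᵥ B *ᵥ w := by
  rw [h.block_eq, Matrix.mul_assoc, ← mulVec_mulVec, dotProduct_transpose_mulVec, dotProduct_comm,
    mulVec_mulVec]

theorem mulVec_dotProduct_mulVec_normal (h : IsBlockForm A M q Q B b ρ) (v : κ → ℝ) :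
    (Q *ᵥ v) ⬝ᵥ A *ᵥ q = v ⬝ᵥ b := by
  rw [h.offDiag_eq, ← mulVec_mulVec, dotProduct_transpose_mulVec, dotProduct_comm]

theorem mulVec_dotProduct_mulVec_add (h : IsBlockForm A M q Q B b ρ) (v y : κ → ℝ) :
    (Q *ᵥ v) ⬝ᵥ A *ᵥ (Q *ᵥ y + q) = v ⬝ᵥ (B *ᵥ y + b) := by
  rw [mulVec_add, dotProduct_add, dotProduct_add, h.mulVec_dotProduct_mulVec,
    h.mulVec_dotProduct_mulVec_normal]

theorem add_dotProduct_mulVec_add (h : IsBlockForm A M q Q B b ρ) (hA : A.IsSymm) (y : κ → ℝ) :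
    (Q *ᵥ y + q) ⬝ᵥ A *ᵥ (Q *ᵥ y + q) = y ⬝ᵥ B *ᵥ y + 2 * (y ⬝ᵥ b) + ρ := by
  have hsymm : q ⬝ᵥ A *ᵥ (Q *ᵥ y) = y ⬝ᵥ b := by
    rw [← h.mulVec_dotProduct_mulVec_normal, ← dotProduct_transpose_mulVec, hA.eq]
  rw [add_dotProduct, h.mulVec_dotProduct_mulVec_add, mulVec_add, dotProduct_add, dotProduct_add,
    hsymm, ← h.corner_eq]
  ring

theorem mulVec_dotProduct_mulVec_right (h : IsBlockForm A M q Q B b ρ) (v w : κ → ℝ) :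
    (Q *ᵥ v) ⬝ᵥ M *ᵥ (Q *ᵥ w) = v ⬝ᵥ w := by
  rw [h.right.mulVec_dotProduct_mulVec, one_mulVec]

theorem mulVec_dotProduct_mulVec_normal_right (h : IsBlockForm A M q Q B b ρ) (v : κ → ℝ) :
    (Q *ᵥ v) ⬝ᵥ M *ᵥ q = 0 := by
  rw [h.right.mulVec_dotProduct_mulVec_normal, dotProduct_zero]

theorem mulVec_dotProduct_mulVec_add_right (h : IsBlockForm A M q Q B b ρ) (v y : κ → ℝ) :
    (Q *ᵥ v) ⬝ᵥ M *ᵥ (Q *ᵥ y + q) = v ⬝ᵥ y := by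
  rw [h.right.mulVec_dotProduct_mulVec_add, one_mulVec, add_zero]

theorem add_dotProduct_mulVec_add_right (h : IsBlockForm A M q Q B b ρ) (hM : M.IsSymm)
    (y : κ → ℝ) : (Q *ᵥ y + q) ⬝ᵥ M *ᵥ (Q *ᵥ y + q) = y ⬝ᵥ y + 1 := by
  rw [h.right.add_dotProduct_mulVec_add hM, one_mulVec, dotProduct_zero, mul_zero, add_zero]

theorem add_dotProduct_mulVec_normal_right (h : IsBlockForm A M q Q B b ρ) (y : κ → ℝ) :
    (Q *ᵥ y + q) ⬝ᵥ M *ᵥ q = 1 := by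
  rw [add_dotProduct, h.mulVec_dotProduct_mulVec_normal_right, h.normalized, zero_add]

theorem mul_add_vecMulVec_eq_one [DecidableEq ι] (h : IsBlockForm A M q Q B b ρ)
    (hcard : Fintype.card ι = Fintype.card κ + 1) :
    Q * (Qᵀ * M) + vecMulVec q (M *ᵥ q) = 1 := by
  have hqQ : (M *ᵥ q) ᵥ* Q = 0 := by
    rw [← mulVec_transpose, mulVec_mulVec, h.orthogonal]
  have hqq : replicateRow Unit (M *ᵥ q) * replicateCol Unit q = 1 := by
    ext
    rw [replicateRow_mul_replicateCol_apply, dotProduct_comm, h.normalized, one_apply_eq]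
  rw [vecMulVec_eq Unit, ← fromCols_mul_fromRows]
  refine (mul_eq_one_comm_of_card_eq _ _ _ (by simp [hcard])).mpr ?_
  rw [fromRows_mul_fromCols, h.orthonormal, ← replicateCol_mulVec, h.orthogonal,
    ← replicateRow_vecMul, hqQ, hqq, replicateCol_zero, replicateRow_zero, fromBlocks_one]

theorem mulVec_add_smul_eq (h : IsBlockForm A M q Q B b ρ) (hM : M.IsSymm)
    (hcard : Fintype.card ι = Fintype.card κ + 1) (x : ι → ℝ) :
    Q *ᵥ ((Qᵀ * M) *ᵥ x) + (q ⬝ᵥ M *ᵥ x) • q = x := by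
  classical
  conv_rhs => rw [← one_mulVec x, ← h.mul_add_vecMulVec_eq_one hcard, add_mulVec, ← mulVec_mulVec,
    vecMulVec_mulVec, op_smul_eq_smul, dotProduct_comm, ← dotProduct_transpose_mulVec, hM.eq]

end IsBlockForm

end BlockForm

section Constants

variable {l μ ρ χ χ' : ℝ}

/-- The paper's `χ_P` for `P = B`: the size of the rank-two part of `∇²φ` relative to `B`.
Here `l < μ` are the two smallest eigenvalues. -/
noncomputable def couplingConst (l μ : ℝ) : ℝ :=
  8 * μ / l * √((μ + l) / (2 * (μ - l)))

/-- The paper's `μ_P / ξ_min` at `χ = χ_P`. -/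
noncomputable def curvLower (l μ ρ χ : ℝ) : ℝ :=
  2 * (1 - 4 * (ρ - l) / (μ - l)) * (1 - l / μ - (2 + χ) * (ρ - l) / μ)

/-- The paper's `L_P / ξ_max` at `χ = χ_P ξ_min / ξ_max`, which is `couplingConst l μ`. The
largest eigenvalue is `L`. -/
noncomputable def curvUpper (l μ L ρ χ : ℝ) : ℝ :=
  2 * (1 - l / L + χ / μ * (ρ - l))

theorem sq_couplingConst (hl : 0 < l) (hlμ : l < μ) :
    couplingConst l μ ^ 2 = 32 * μ ^ 2 * (μ + l) / (l ^ 2 * (μ - l)) := by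
  have : 0 < μ - l := sub_pos.mpr hlμ
  have hμ : 0 < μ := hl.trans hlμ
  rw [couplingConst, mul_pow, Real.sq_sqrt (by positivity)]
  field_simp
  ring

theorem four_le_couplingConst (hl : 0 < l) (hlμ : l < μ) : 4 ≤ couplingConst l μ := by
  have : 0 < μ - l := sub_pos.mpr hlμ
  have hsqrt : 1 / 2 ≤ √((μ + l) / (2 * (μ - l))) := by
    refine Real.le_sqrt_of_sq_le ?_
    rw [le_div_iff₀ (by positivity)]
    linarith
  calc (4 : ℝ) = 8 * 1 * (1 / 2) := by norm_num
    _ ≤ 8 * (μ / l) * √((μ + l) / (2 * (μ - l))) :=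
      mul_le_mul (by linarith [(one_le_div hl).mpr hlμ.le]) hsqrt (by norm_num)
        (mul_nonneg (by norm_num) (div_nonneg (hl.trans hlμ).le hl.le))
    _ = couplingConst l μ := by rw [couplingConst, mul_div_assoc]

theorem couplingConst_nonneg (hl : 0 < l) (hlμ : l < μ) : 0 ≤ couplingConst l μ :=
  zero_le_four.trans (four_le_couplingConst hl hlμ)

theorem one_sub_div_sub_div_pos (hμ : 0 < μ) (hρ : (2 + χ) * (ρ - l) < μ - l) :
    0 < 1 - l / μ - (2 + χ) * (ρ - l) / μ := by
  rw [one_sub_div hμ.ne', ← sub_div]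
  exact div_pos (sub_pos.mpr hρ) hμ

theorem curvLower_pos (hμ : 0 < μ) (hlμ : l < μ) (hlρ : l ≤ ρ) (hχ : 2 ≤ χ)
    (hρ : (2 + χ) * (ρ - l) < μ - l) : 0 < curvLower l μ ρ χ := by
  have hδ : 4 * (ρ - l) / (μ - l) < 1 := by
    rw [div_lt_one (sub_pos.mpr hlμ)]
    exact (mul_le_mul_of_nonneg_right (by linarith) (sub_nonneg.mpr hlρ)).trans_lt hρ
  exact mul_pos (mul_pos two_pos (sub_pos.mpr hδ)) (one_sub_div_sub_div_pos hμ hρ)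

theorem curvLower_le_curvLower (hμ : 0 < μ) (hlμ : l < μ) (hlρ : l ≤ ρ)
    (hρ : 4 * (ρ - l) ≤ μ - l) (hχ : χ ≤ χ') : curvLower l μ ρ χ' ≤ curvLower l μ ρ χ := by
  have hδ : 0 ≤ 1 - 4 * (ρ - l) / (μ - l) := sub_nonneg.mpr ((div_le_one (sub_pos.mpr hlμ)).mpr hρ)
  have : 0 ≤ ρ - l := sub_nonneg.mpr hlρ
  rw [curvLower, curvLower]
  gcongr

theorem curvUpper_nonneg {L : ℝ} (hlL : l ≤ L) (hL : 0 < L) (hμ : 0 < μ) (hlρ : l ≤ ρ)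
    (hχ : 0 ≤ χ) : 0 ≤ curvUpper l μ L ρ χ := by
  have : 0 ≤ ρ - l := sub_nonneg.mpr hlρ
  have hlL' : 0 ≤ 1 - l / L := sub_nonneg.mpr ((div_le_one hL).mpr hlL)
  rw [curvUpper]
  positivity

theorem le_of_forall_ne_le {ι : Type*} {f : ι → ℝ} {i₀ : ι} (h₀ : f i₀ ≤ μ)
    (h : ∀ i ≠ i₀, μ ≤ f i) (i : ι) : f i₀ ≤ f i := by
  obtain rfl | hi := eq_or_ne i i₀
  exacts [le_rfl, h₀.trans (h i hi)]

end Constants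

section RayleighChart

variable {m : ℕ} {B : Matrix (Fin m) (Fin m) ℝ} {b : Fin m → ℝ} {ρ : ℝ}

theorem isHermitian_hessPhi (hB : B.IsHermitian) (y : Fin m → ℝ) :
    (hessPhi B b ρ y).IsHermitian := by
  rw [hessPhi, sub_sub]
  refine ((hB.sub (isHermitian_one.smul (.all _))).sub ?_).smul (.all _)
  rw [IsHermitian, conjTranspose_eq_transpose_of_trivial, transpose_add, transpose_vecMulVec,
    transpose_vecMulVec, add_comm]

theorem dotProduct_hessPhi_mulVec (v y : Fin m → ℝ) :
    v ⬝ᵥ hessPhi B b ρ y *ᵥ v = 2 / (y ⬝ᵥ y + 1) *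
      (v ⬝ᵥ B *ᵥ v - phiAux B b ρ y * (v ⬝ᵥ v) - 2 * (v ⬝ᵥ y) * (v ⬝ᵥ gradPhi B b ρ y)) := by
  simp only [hessPhi, smul_mulVec, sub_mulVec, one_mulVec, vecMulVec_mulVec, op_smul_eq_smul,
    dotProduct_smul, dotProduct_sub, smul_eq_mul]
  rw [dotProduct_comm y v, dotProduct_comm (gradPhi B b ρ y) v]
  ring

theorem dotProduct_self_add_one_pos (y : Fin m → ℝ) : 0 < y ⬝ᵥ y + 1 :=
  add_pos_of_nonneg_of_pos (Finset.sum_nonneg fun i _ ↦ mul_self_nonneg (y i)) one_pos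

namespace IsBlockForm

variable {n : ℕ} {A M : Matrix (Fin n) (Fin n) ℝ} {q : Fin n → ℝ} {Q : Matrix (Fin n) (Fin m) ℝ}

theorem add_dotProduct_mulVec_add_eq_phiAux (h : IsBlockForm A M q Q B b ρ) (hA : A.IsSymm)
    (hM : M.IsSymm) (y : Fin m → ℝ) :
    (Q *ᵥ y + q) ⬝ᵥ A *ᵥ (Q *ᵥ y + q) =
      phiAux B b ρ y * ((Q *ᵥ y + q) ⬝ᵥ M *ᵥ (Q *ᵥ y + q)) := by
  rw [h.add_dotProduct_mulVec_add hA, h.add_dotProduct_mulVec_add_right hM, phiAux,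
    div_mul_cancel₀ _ (dotProduct_self_add_one_pos y).ne']

theorem phiAux_eq_Rq (h : IsBlockForm A M q Q B b ρ) (hA : A.IsSymm) (hM : M.IsSymm)
    (y : Fin m → ℝ) : phiAux B b ρ y = Rq A M (Q *ᵥ y + q) := by
  rw [Rq, h.add_dotProduct_mulVec_add hA, h.add_dotProduct_mulVec_add_right hM, phiAux]

theorem phiAux_psiMap (h : IsBlockForm A M q Q B b ρ) (hA : A.IsSymm) (hM : M.IsSymm)
    (hnm : n = m + 1) {x : Fin n → ℝ} (hx : q ⬝ᵥ M *ᵥ x ≠ 0) :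
    phiAux B b ρ (psiMap M q Q x) = Rq A M x := by
  have hlift : Q *ᵥ psiMap M q Q x + q = (q ⬝ᵥ M *ᵥ x)⁻¹ • x := by
    rw [psiMap, mulVec_smul, eq_inv_smul_iff₀ hx, smul_add, smul_inv_smul₀ hx,
      h.mulVec_add_smul_eq hM (by simpa using hnm)]
  rw [h.phiAux_eq_Rq hA hM, hlift, Rq, Rq]
  simp only [mulVec_smul, smul_dotProduct, dotProduct_smul, smul_eq_mul]
  rw [mul_div_mul_left _ _ (inv_ne_zero hx), mul_div_mul_left _ _ (inv_ne_zero hx)]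

theorem phiAux_le_of_mem_image_Xset (h : IsBlockForm A M q Q B b ρ) (hA : A.IsSymm)
    (hM : M.IsSymm) (hnm : n = m + 1) {y : Fin m → ℝ} (hy : y ∈ psiMap M q Q '' Xset A M q) :
    phiAux B b ρ y ≤ ρ := by
  obtain ⟨x, ⟨⟨-, hx⟩, hxρ⟩, rfl⟩ := hy
  rwa [h.phiAux_psiMap hA hM hnm hx.ne', h.corner_eq, ← div_one (q ⬝ᵥ A *ᵥ q), ← h.normalized]

theorem dotProduct_gradPhi (h : IsBlockForm A M q Q B b ρ) (v y : Fin m → ℝ) :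
    v ⬝ᵥ gradPhi B b ρ y = 2 / (y ⬝ᵥ y + 1) * ((Q *ᵥ v) ⬝ᵥ A *ᵥ (Q *ᵥ y + q) -
      phiAux B b ρ y * ((Q *ᵥ v) ⬝ᵥ M *ᵥ (Q *ᵥ y + q))) := by
  rw [h.mulVec_dotProduct_mulVec_add, h.mulVec_dotProduct_mulVec_add_right, gradPhi,
    sub_add_eq_add_sub]
  simp only [dotProduct_smul, dotProduct_sub, smul_eq_mul]

section Eigenbasis

variable {lam : Fin n → ℝ} {u : Fin n → Fin n → ℝ} {i₀ : Fin n} {l μ : ℝ}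

theorem le_phiAux (h : IsBlockForm A M q Q B b ρ) (hE : IsPencilEigenbasis A M lam u)
    (hl : ∀ i, l ≤ lam i) (y : Fin m → ℝ) : l ≤ phiAux B b ρ y := by
  have hle := hE.mul_le_dotProduct_mulVec hl (Q *ᵥ y + q)
  rw [h.add_dotProduct_mulVec_add_eq_phiAux hE.isSymm_left hE.isSymm_right,
    h.add_dotProduct_mulVec_add_right hE.isSymm_right] at hle
  exact le_of_mul_le_mul_right hle (dotProduct_self_add_one_pos y)

theorem mul_dotProduct_self_le_of_gap (h : IsBlockForm A M q Q B b ρ)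
    (hE : IsPencilEigenbasis A M lam u) (hgap : lam i₀ ≤ μ) (hμ : ∀ i ≠ i₀, μ ≤ lam i)
    (v : Fin m → ℝ) :
    (lam i₀ + μ - ρ) * (v ⬝ᵥ v) ≤ v ⬝ᵥ B *ᵥ v := by
  have hle := hE.mul_le_dotProduct_mulVec_of_orthogonal hgap hμ
    (h.mulVec_dotProduct_mulVec_normal_right v) h.normalized
  rwa [h.mulVec_dotProduct_mulVec, h.mulVec_dotProduct_mulVec_right, ← h.corner_eq] at hle

theorem dotProduct_mulVec_le_mul {L : ℝ} (h : IsBlockForm A M q Q B b ρ)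
    (hE : IsPencilEigenbasis A M lam u) (hL : ∀ i, lam i ≤ L) (v : Fin m → ℝ) :
    v ⬝ᵥ B *ᵥ v ≤ L * (v ⬝ᵥ v) := by
  have hle := hE.dotProduct_mulVec_le_mul hL (Q *ᵥ v)
  rwa [h.mulVec_dotProduct_mulVec, h.mulVec_dotProduct_mulVec_right] at hle

theorem mul_dotProduct_self_le (h : IsBlockForm A M q Q B b ρ)
    (hE : IsPencilEigenbasis A M lam u) (hl : ∀ i, l ≤ lam i) (v : Fin m → ℝ) :
    l * (v ⬝ᵥ v) ≤ v ⬝ᵥ B *ᵥ v := by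
  have hle := hE.mul_le_dotProduct_mulVec hl (Q *ᵥ v)
  rwa [h.mulVec_dotProduct_mulVec, h.mulVec_dotProduct_mulVec_right] at hle

theorem sq_dotProduct_gradPhi_le (h : IsBlockForm A M q Q B b ρ)
    (hE : IsPencilEigenbasis A M lam u) (hl0 : 0 < l) (hl : ∀ i, l ≤ lam i) (v y : Fin m → ℝ) :
    (v ⬝ᵥ gradPhi B b ρ y) ^ 2 ≤
      4 / (y ⬝ᵥ y + 1) * (phiAux B b ρ y * (phiAux B b ρ y - l) / l) * (v ⬝ᵥ B *ᵥ v) := by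
  have hres := hE.sq_dotProduct_residual_le hl0 hl
    (h.add_dotProduct_mulVec_add_eq_phiAux hE.isSymm_left hE.isSymm_right y) (Q *ᵥ v)
  rw [h.mulVec_dotProduct_mulVec, h.add_dotProduct_mulVec_add_right hE.isSymm_right] at hres
  have hN := dotProduct_self_add_one_pos y
  rw [h.dotProduct_gradPhi, mul_pow]
  refine (mul_le_mul_of_nonneg_left hres (sq_nonneg _)).trans_eq ?_
  field_simp
  ring

theorem one_sub_mul_dotProduct_self_add_one_le_one (h : IsBlockForm A M q Q B b ρ)
    (hE : IsPencilEigenbasis A M lam u) (hgap : lam i₀ < μ) (hμ : ∀ i ≠ i₀, μ ≤ lam i)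
    (hρ : 2 * (ρ - lam i₀) ≤ μ - lam i₀) {y : Fin m → ℝ} (hy : phiAux B b ρ y ≤ ρ) :
    (1 - 4 * (ρ - lam i₀) / (μ - lam i₀)) * (y ⬝ᵥ y + 1) ≤ 1 := by
  have hd : 0 < μ - lam i₀ := sub_pos.mpr hgap
  have hl : lam i₀ ≤ ρ := (h.le_phiAux hE (le_of_forall_ne_le hgap.le hμ) y).trans hy
  have hzz := h.add_dotProduct_mulVec_add_right hE.isSymm_right y
  have hN := dotProduct_self_add_one_pos y
  have hzaligned := hE.one_sub_mul_le_sq_dotProduct_mulVec hgap hμ (ρ := ρ) (x := Q *ᵥ y + q) <| by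
    rw [h.add_dotProduct_mulVec_add_eq_phiAux hE.isSymm_left hE.isSymm_right, hzz]
    exact mul_le_mul_of_nonneg_right hy hN.le
  have hqaligned := hE.one_sub_mul_le_sq_dotProduct_mulVec hgap hμ (ρ := ρ) (x := q) <| by
    rw [h.normalized, h.corner_eq, mul_one]
  have hδ0 : 0 ≤ (ρ - lam i₀) / (μ - lam i₀) := div_nonneg (sub_nonneg.mpr hl) hd.le
  have hδ : 2 * ((ρ - lam i₀) / (μ - lam i₀)) ≤ 1 := by
    rwa [← mul_div_assoc, div_le_one hd]
  have hangle := hE.sq_mul_le_sq_dotProduct_mulVec_of_aligned hδ0 hδ hzaligned hqaligned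
  rw [hzz, h.normalized, h.add_dotProduct_mulVec_normal_right, one_pow, mul_one] at hangle
  refine (mul_le_mul_of_nonneg_right ?_ hN.le).trans hangle
  rw [mul_div_assoc]
  linarith [sq_nonneg ((ρ - lam i₀) / (μ - lam i₀))]

theorem abs_two_mul_mul_dotProduct_gradPhi_le (h : IsBlockForm A M q Q B b ρ)
    (hE : IsPencilEigenbasis A M lam u) (hl0 : 0 < lam i₀) (hgap : lam i₀ < μ)
    (hμ : ∀ i ≠ i₀, μ ≤ lam i) (hρ : 2 * (ρ - lam i₀) ≤ μ - lam i₀) {y : Fin m → ℝ}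
    (hy : phiAux B b ρ y ≤ ρ) (v : Fin m → ℝ) :
    |2 * (v ⬝ᵥ y) * (v ⬝ᵥ gradPhi B b ρ y)| ≤
      couplingConst (lam i₀) μ * (ρ - lam i₀) / μ * (v ⬝ᵥ B *ᵥ v) := by
  have hl := le_of_forall_ne_le hgap.le hμ
  have hφ := h.le_phiAux hE hl y
  have hgrad := h.sq_dotProduct_gradPhi_le hE hl0 hl v y
  have hy4 : y ⬝ᵥ y ≤ 4 * (ρ - lam i₀) / (μ - lam i₀) * (y ⬝ᵥ y + 1) := by
    linarith [h.one_sub_mul_dotProduct_self_add_one_le_one hE hgap hμ hρ hy]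
  have hv : v ⬝ᵥ v ≤ (v ⬝ᵥ B *ᵥ v) / lam i₀ := by
    rw [le_div_iff₀' hl0]
    exact h.mul_dotProduct_self_le hE hl v
  set φ := phiAux B b ρ y
  set N := y ⬝ᵥ y + 1
  set l := lam i₀
  set β := v ⬝ᵥ B *ᵥ v
  have hN : 0 < N := dotProduct_self_add_one_pos y
  have hd : 0 < μ - l := sub_pos.mpr hgap
  have hμ0 : 0 < μ := hl0.trans hgap
  have hs : 0 ≤ v ⬝ᵥ v := dotProduct_star_self_nonneg v
  have hβ : 0 ≤ β := (mul_nonneg hl0.le hs).trans (h.mul_dotProduct_self_le hE hl v)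
  have hlρ : 0 ≤ ρ - l := sub_nonneg.mpr (hφ.trans hy)
  have hvy : (v ⬝ᵥ y) ^ 2 ≤ (v ⬝ᵥ v) * (y ⬝ᵥ y) := by
    simpa only [dotProduct, sq] using Finset.sum_mul_sq_le_sq_mul_sq Finset.univ v y
  refine abs_le_of_sq_le_sq ?_ (by have := couplingConst_nonneg hl0 hgap; positivity)
  calc (2 * (v ⬝ᵥ y) * (v ⬝ᵥ gradPhi B b ρ y)) ^ 2
      = 4 * (v ⬝ᵥ y) ^ 2 * (v ⬝ᵥ gradPhi B b ρ y) ^ 2 := by ring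
    _ ≤ 4 * (β / l * (4 * (ρ - l) / (μ - l) * N)) *
        (4 / N * ((μ + l) / 2 * (ρ - l) / l) * β) := by
      refine mul_le_mul ?_ (hgrad.trans ?_) (sq_nonneg _) (by positivity)
      · rw [mul_le_mul_iff_right₀ four_pos]
        exact hvy.trans (mul_le_mul hv hy4 (dotProduct_star_self_nonneg y) (by positivity))
      · have hφμ : φ ≤ (μ + l) / 2 := by linarith
        gcongr
    _ = (couplingConst l μ * (ρ - l) / μ * β) ^ 2 := by
      rw [mul_pow, div_pow, mul_pow, sq_couplingConst hl0 hgap]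
      field_simp
      ring

theorem mul_le_dotProduct_mulVec_sub (h : IsBlockForm A M q Q B b ρ)
    (hE : IsPencilEigenbasis A M lam u) (hl0 : 0 < lam i₀) (hgap : lam i₀ < μ)
    (hμ : ∀ i ≠ i₀, μ ≤ lam i) (hl : lam i₀ ≤ ρ)
    (hρ : 2 * (ρ - lam i₀) ≤ μ - lam i₀) {φ : ℝ} (hφ : φ ≤ ρ) (v : Fin m → ℝ) :
    (1 - lam i₀ / μ - 2 * (ρ - lam i₀) / μ) * (v ⬝ᵥ B *ᵥ v) ≤ v ⬝ᵥ B *ᵥ v - φ * (v ⬝ᵥ v) := by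
  have hμ0 : 0 < μ := hl0.trans hgap
  have hs : 0 ≤ v ⬝ᵥ v := dotProduct_star_self_nonneg v
  have hμρ : μ * ρ ≤ (2 * ρ - lam i₀) * (lam i₀ + μ - ρ) := by
    linarith [mul_nonneg (sub_nonneg.mpr hl) (sub_nonneg.mpr hρ)]
  have hβ := h.mul_dotProduct_self_le_of_gap hE hgap.le hμ v
  have hφs : φ * (v ⬝ᵥ v) ≤ (2 * ρ - lam i₀) / μ * (v ⬝ᵥ B *ᵥ v) :=
    calc φ * (v ⬝ᵥ v) ≤ ρ * (v ⬝ᵥ v) := mul_le_mul_of_nonneg_right hφ hs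
      _ ≤ (2 * ρ - lam i₀) * (lam i₀ + μ - ρ) / μ * (v ⬝ᵥ v) := by
        gcongr
        rwa [le_div_iff₀' hμ0]
      _ = (2 * ρ - lam i₀) / μ * ((lam i₀ + μ - ρ) * (v ⬝ᵥ v)) := by ring
      _ ≤ (2 * ρ - lam i₀) / μ * (v ⬝ᵥ B *ᵥ v) := by
        gcongr
        exact div_nonneg (by linarith) hμ0.le
  calc (1 - lam i₀ / μ - 2 * (ρ - lam i₀) / μ) * (v ⬝ᵥ B *ᵥ v)
      = v ⬝ᵥ B *ᵥ v - (2 * ρ - lam i₀) / μ * (v ⬝ᵥ B *ᵥ v) := by ring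
    _ ≤ v ⬝ᵥ B *ᵥ v - φ * (v ⬝ᵥ v) := sub_le_sub_left hφs _

theorem dotProduct_mulVec_sub_le_mul {L φ : ℝ} (h : IsBlockForm A M q Q B b ρ)
    (hE : IsPencilEigenbasis A M lam u) (hL0 : 0 < L) (hL : ∀ i, lam i ≤ L) (hl0 : 0 ≤ l)
    (hφ : l ≤ φ) (v : Fin m → ℝ) :
    v ⬝ᵥ B *ᵥ v - φ * (v ⬝ᵥ v) ≤ (1 - l / L) * (v ⬝ᵥ B *ᵥ v) := by
  have hs : 0 ≤ v ⬝ᵥ v := dotProduct_star_self_nonneg v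
  have hφs : l / L * (v ⬝ᵥ B *ᵥ v) ≤ φ * (v ⬝ᵥ v) :=
    calc l / L * (v ⬝ᵥ B *ᵥ v) ≤ l / L * (L * (v ⬝ᵥ v)) := by
          gcongr
          exact h.dotProduct_mulVec_le_mul hE hL v
      _ = l * (v ⬝ᵥ v) := by rw [← mul_assoc, div_mul_cancel₀ _ hL0.ne']
      _ ≤ φ * (v ⬝ᵥ v) := mul_le_mul_of_nonneg_right hφ hs
  linarith

theorem curvLower_mul_le_dotProduct_hessPhi_mulVec (h : IsBlockForm A M q Q B b ρ)
    (hE : IsPencilEigenbasis A M lam u) (hl0 : 0 < lam i₀) (hgap : lam i₀ < μ)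
    (hμ : ∀ i ≠ i₀, μ ≤ lam i)
    (hρ : (2 + couplingConst (lam i₀) μ) * (ρ - lam i₀) < μ - lam i₀) {y : Fin m → ℝ}
    (hy : phiAux B b ρ y ≤ ρ) (v : Fin m → ℝ) :
    curvLower (lam i₀) μ ρ (couplingConst (lam i₀) μ) * (v ⬝ᵥ B *ᵥ v) ≤
      v ⬝ᵥ hessPhi B b ρ y *ᵥ v := by
  have hl := le_of_forall_ne_le hgap.le hμ
  have hlρ : lam i₀ ≤ ρ := (h.le_phiAux hE hl y).trans hy
  have hρ2 : 2 * (ρ - lam i₀) ≤ μ - lam i₀ := by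
    linarith [mul_nonneg (couplingConst_nonneg hl0 hgap) (sub_nonneg.mpr hlρ)]
  have hN := dotProduct_self_add_one_pos y
  have hβ := (mul_nonneg hl0.le (dotProduct_star_self_nonneg v)).trans
    (h.mul_dotProduct_self_le hE hl v)
  have hmain := h.mul_le_dotProduct_mulVec_sub hE hl0 hgap hμ hlρ hρ2 hy v
  have hcoupling := le_of_abs_le (h.abs_two_mul_mul_dotProduct_gradPhi_le hE hl0 hgap hμ hρ2 hy v)
  have hprefactor : 2 * (1 - 4 * (ρ - lam i₀) / (μ - lam i₀)) ≤ 2 / (y ⬝ᵥ y + 1) := by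
    rw [le_div_iff₀ hN]
    linarith [h.one_sub_mul_dotProduct_self_add_one_le_one hE hgap hμ hρ2 hy]
  have hbracket : (1 - lam i₀ / μ - (2 + couplingConst (lam i₀) μ) * (ρ - lam i₀) / μ) *
      (v ⬝ᵥ B *ᵥ v) ≤ v ⬝ᵥ B *ᵥ v - phiAux B b ρ y * (v ⬝ᵥ v) -
        2 * (v ⬝ᵥ y) * (v ⬝ᵥ gradPhi B b ρ y) := by
    refine Eq.trans_le ?_ (sub_le_sub hmain hcoupling)
    ring
  rw [dotProduct_hessPhi_mulVec, curvLower, mul_assoc]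
  exact mul_le_mul hprefactor hbracket
    (mul_nonneg (one_sub_div_sub_div_pos (hl0.trans hgap) hρ).le hβ) (div_pos two_pos hN).le

theorem dotProduct_hessPhi_mulVec_le_curvUpper_mul {L : ℝ} (h : IsBlockForm A M q Q B b ρ)
    (hE : IsPencilEigenbasis A M lam u) (hl0 : 0 < lam i₀) (hgap : lam i₀ < μ)
    (hμ : ∀ i ≠ i₀, μ ≤ lam i) (hL : ∀ i, lam i ≤ L)
    (hρ : 2 * (ρ - lam i₀) ≤ μ - lam i₀) {y : Fin m → ℝ}
    (hy : phiAux B b ρ y ≤ ρ) (v : Fin m → ℝ) :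
    v ⬝ᵥ hessPhi B b ρ y *ᵥ v ≤
      curvUpper (lam i₀) μ L ρ (couplingConst (lam i₀) μ) * (v ⬝ᵥ B *ᵥ v) := by
  have hl := le_of_forall_ne_le hgap.le hμ
  have hlφ := h.le_phiAux hE hl y
  have hβ := (mul_nonneg hl0.le (dotProduct_star_self_nonneg v)).trans
    (h.mul_dotProduct_self_le hE hl v)
  have hmain := h.dotProduct_mulVec_sub_le_mul hE (hl0.trans_le (hL i₀)) hL hl0.le hlφ v
  have hcoupling := neg_le_of_abs_le
    (h.abs_two_mul_mul_dotProduct_gradPhi_le hE hl0 hgap hμ hρ hy v)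
  have hprefactor : 2 / (y ⬝ᵥ y + 1) ≤ 2 :=
    div_le_self two_pos.le (le_add_of_nonneg_left (dotProduct_star_self_nonneg y))
  have hnonneg := mul_nonneg (curvUpper_nonneg (hL i₀) (hl0.trans_le (hL i₀)) (hl0.trans hgap)
    (hlφ.trans hy) (couplingConst_nonneg hl0 hgap)) hβ
  rw [curvUpper, mul_assoc] at hnonneg ⊢
  calc v ⬝ᵥ hessPhi B b ρ y *ᵥ v
      = 2 / (y ⬝ᵥ y + 1) * (v ⬝ᵥ B *ᵥ v - phiAux B b ρ y * (v ⬝ᵥ v) -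
        2 * (v ⬝ᵥ y) * (v ⬝ᵥ gradPhi B b ρ y)) := dotProduct_hessPhi_mulVec v y
    _ ≤ 2 / (y ⬝ᵥ y + 1) * ((1 - lam i₀ / L) * (v ⬝ᵥ B *ᵥ v) +
        couplingConst (lam i₀) μ * (ρ - lam i₀) / μ * (v ⬝ᵥ B *ᵥ v)) :=
      mul_le_mul_of_nonneg_left (by linarith) (div_pos two_pos (dotProduct_self_add_one_pos y)).le
    _ = 2 / (y ⬝ᵥ y + 1) * ((1 - lam i₀ / L + couplingConst (lam i₀) μ / μ * (ρ - lam i₀)) *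
        (v ⬝ᵥ B *ᵥ v)) := by ring
    _ ≤ 2 * ((1 - lam i₀ / L + couplingConst (lam i₀) μ / μ * (ρ - lam i₀)) * (v ⬝ᵥ B *ᵥ v)) :=
      mul_le_mul_of_nonneg_right hprefactor (nonneg_of_mul_nonneg_right hnonneg two_pos)

end Eigenbasis

end IsBlockForm

end RayleighChart

section Loewner

open scoped MatrixOrder

variable {n m : ℕ} {A M : Matrix (Fin n) (Fin n) ℝ} {q : Fin n → ℝ} {Q : Matrix (Fin n) (Fin m) ℝ}
  {B P : Matrix (Fin m) (Fin m) ℝ} {b : Fin m → ℝ} {ρ : ℝ} {lam : Fin n → ℝ}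
  {u : Fin n → Fin n → ℝ} {i₀ : Fin n} {μ L ξ : ℝ} {y : Fin m → ℝ}

namespace IsBlockForm

theorem curvLower_smul_le_hessPhi (h : IsBlockForm A M q Q B b ρ)
    (hE : IsPencilEigenbasis A M lam u) (hl0 : 0 < lam i₀) (hgap : lam i₀ < μ)
    (hμ : ∀ i ≠ i₀, μ ≤ lam i)
    (hρ : (2 + couplingConst (lam i₀) μ) * (ρ - lam i₀) < μ - lam i₀)
    (hy : phiAux B b ρ y ≤ ρ) :
    curvLower (lam i₀) μ ρ (couplingConst (lam i₀) μ) • B ≤ hessPhi B b ρ y := by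
  have hB : B.IsHermitian := h.isSymm_block hE.isSymm_left
  refine le_of_forall_dotProduct_mulVec_le (hB.smul (.all _)) (isHermitian_hessPhi hB y) fun v ↦ ?_
  rw [smul_mulVec, dotProduct_smul, smul_eq_mul]
  exact h.curvLower_mul_le_dotProduct_hessPhi_mulVec hE hl0 hgap hμ hρ hy v

theorem hessPhi_le_curvUpper_smul (h : IsBlockForm A M q Q B b ρ)
    (hE : IsPencilEigenbasis A M lam u) (hl0 : 0 < lam i₀) (hgap : lam i₀ < μ)
    (hμ : ∀ i ≠ i₀, μ ≤ lam i) (hL : ∀ i, lam i ≤ L) (hρ : 2 * (ρ - lam i₀) ≤ μ - lam i₀)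
    (hy : phiAux B b ρ y ≤ ρ) :
    hessPhi B b ρ y ≤ curvUpper (lam i₀) μ L ρ (couplingConst (lam i₀) μ) • B := by
  have hB : B.IsHermitian := h.isSymm_block hE.isSymm_left
  refine le_of_forall_dotProduct_mulVec_le (isHermitian_hessPhi hB y) (hB.smul (.all _)) fun v ↦ ?_
  rw [smul_mulVec, dotProduct_smul, smul_eq_mul]
  exact h.dotProduct_hessPhi_mulVec_le_curvUpper_mul hE hl0 hgap hμ hL hρ hy v

theorem mul_curvLower_smul_le_hessPhi {χ : ℝ} (h : IsBlockForm A M q Q B b ρ)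
    (hE : IsPencilEigenbasis A M lam u) (hl0 : 0 < lam i₀) (hgap : lam i₀ < μ)
    (hμ : ∀ i ≠ i₀, μ ≤ lam i) (hB : B.PosSemidef) (hP : ξ • P ≤ B)
    (hχ : couplingConst (lam i₀) μ ≤ χ) (hρ : (2 + χ) * (ρ - lam i₀) < μ - lam i₀)
    (hy : phiAux B b ρ y ≤ ρ) : (ξ * curvLower (lam i₀) μ ρ χ) • P ≤ hessPhi B b ρ y := by
  have hμ0 : 0 < μ := hl0.trans hgap
  have hl : lam i₀ ≤ ρ := (h.le_phiAux hE (le_of_forall_ne_le hgap.le hμ) y).trans hy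
  have hlρ : 0 ≤ ρ - lam i₀ := sub_nonneg.mpr hl
  have hχ4 := four_le_couplingConst hl0 hgap
  have hρ4 : 4 * (ρ - lam i₀) ≤ μ - lam i₀ :=
    (mul_le_mul_of_nonneg_right (by linarith) hlρ).trans hρ.le
  have hρB : (2 + couplingConst (lam i₀) μ) * (ρ - lam i₀) < μ - lam i₀ :=
    (mul_le_mul_of_nonneg_right (by linarith) hlρ).trans_lt hρ
  calc (ξ * curvLower (lam i₀) μ ρ χ) • P = curvLower (lam i₀) μ ρ χ • ξ • P := by
        rw [mul_comm, mul_smul]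
    _ ≤ curvLower (lam i₀) μ ρ χ • B :=
      smul_le_smul_of_nonneg_left hP (curvLower_pos hμ0 hgap hl (by linarith) hρ).le
    _ ≤ curvLower (lam i₀) μ ρ (couplingConst (lam i₀) μ) • B :=
      smul_le_smul_of_nonneg_right (curvLower_le_curvLower hμ0 hgap hl hρ4 hχ) hB.nonneg
    _ ≤ hessPhi B b ρ y := h.curvLower_smul_le_hessPhi hE hl0 hgap hμ hρB hy

theorem hessPhi_le_mul_curvUpper_smul (h : IsBlockForm A M q Q B b ρ)
    (hE : IsPencilEigenbasis A M lam u) (hl0 : 0 < lam i₀) (hgap : lam i₀ < μ)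
    (hμ : ∀ i ≠ i₀, μ ≤ lam i) (hL : ∀ i, lam i ≤ L) (hP : B ≤ ξ • P)
    (hρ : 2 * (ρ - lam i₀) ≤ μ - lam i₀) (hy : phiAux B b ρ y ≤ ρ) :
    hessPhi B b ρ y ≤ (ξ * curvUpper (lam i₀) μ L ρ (couplingConst (lam i₀) μ)) • P := by
  have hl : lam i₀ ≤ ρ := (h.le_phiAux hE (le_of_forall_ne_le hgap.le hμ) y).trans hy
  rw [mul_comm, mul_smul]
  exact (h.hessPhi_le_curvUpper_smul hE hl0 hgap hμ hL hρ hy).trans <|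
    smul_le_smul_of_nonneg_left hP <| curvUpper_nonneg (hL i₀) (hl0.trans_le (hL i₀))
      (hl0.trans hgap) hl (couplingConst_nonneg hl0 hgap)

theorem hessPhi_mem_Icc {χ ξ' : ℝ} (h : IsBlockForm A M q Q B b ρ)
    (hE : IsPencilEigenbasis A M lam u) (hl0 : 0 < lam i₀) (hgap : lam i₀ < μ)
    (hμ : ∀ i ≠ i₀, μ ≤ lam i) (hL : ∀ i, lam i ≤ L) (hB : B.PosSemidef) (hPB : ξ • P ≤ B)
    (hBP : B ≤ ξ' • P) (hχ : couplingConst (lam i₀) μ ≤ χ)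
    (hρ : (2 + χ) * (ρ - lam i₀) < μ - lam i₀) (hy : phiAux B b ρ y ≤ ρ) :
    hessPhi B b ρ y ∈ Set.Icc ((ξ * curvLower (lam i₀) μ ρ χ) • P)
      ((ξ' * curvUpper (lam i₀) μ L ρ (couplingConst (lam i₀) μ)) • P) := by
  have hl : lam i₀ ≤ ρ := (h.le_phiAux hE (le_of_forall_ne_le hgap.le hμ) y).trans hy
  have hρ2 : 2 * (ρ - lam i₀) ≤ μ - lam i₀ := by
    refine (mul_le_mul_of_nonneg_right ?_ (sub_nonneg.mpr hl)).trans hρ.le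
    linarith [couplingConst_nonneg hl0 hgap]
  exact ⟨h.mul_curvLower_smul_le_hessPhi hE hl0 hgap hμ hB hPB hχ hρ hy,
    h.hessPhi_le_mul_curvUpper_smul hE hl0 hgap hμ hL hBP hρ2 hy⟩

end IsBlockForm

end Loewner

/-- Under λ₁ ≤ ρ_q < λ₁ + (λ₂−λ₁)/(2+χ_P), we have μ_P > 0 and for all y ∈ Y,
μ_P P ⪯ ∇²φ(y) ⪯ L_P P. -/
theorem stmt_4 (n : ℕ)
    (A M : Matrix (Fin (n+2)) (Fin (n+2)) ℝ)
    (hA : A.PosDef) (hM : M.PosDef)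
    (q : Fin (n+2) → ℝ) (Q : Matrix (Fin (n+2)) (Fin (n+1)) ℝ)
    (hq1 : q ⬝ᵥ (M *ᵥ q) = 1)
    (hQMQ : Qᵀ * M * Q = 1)
    (hQMq : (Qᵀ * M) *ᵥ q = 0)
    (lam : Fin (n+2) → ℝ) (u : Fin (n+2) → Fin (n+2) → ℝ)
    (hlam0 : 0 < lam 0) (hlam01 : lam 0 < lam 1) (hmono : Monotone lam)
    (heig : ∀ i, A *ᵥ u i = lam i • (M *ᵥ u i))
    (horth : ∀ i j, u i ⬝ᵥ (M *ᵥ u j) = if i = j then (1:ℝ) else 0)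
    (hqu1 : 0 < q ⬝ᵥ (M *ᵥ u 0))
    (B : Matrix (Fin (n+1)) (Fin (n+1)) ℝ) (hB : B = Qᵀ * A * Q)
    (b : Fin (n+1) → ℝ) (hb : b = (Qᵀ * A) *ᵥ q)
    (ρq : ℝ) (hρq : ρq = Rq A M q)
    (P : Matrix (Fin (n+1)) (Fin (n+1)) ℝ) (hP : P.PosDef)
    (ximin ximax : ℝ)
    (hximin : IsLeast {ξ : ℝ | ∃ v : Fin (n+1) → ℝ, v ≠ 0 ∧ B *ᵥ v = ξ • (P *ᵥ v)} ximin)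
    (hximax : IsGreatest {ξ : ℝ | ∃ v : Fin (n+1) → ℝ, v ≠ 0 ∧ B *ᵥ v = ξ • (P *ᵥ v)} ximax)
    (χP : ℝ)
    (hχP : χP = (8 * lam 1 / lam 0) * (ximax / ximin) *
      Real.sqrt ((lam 1 + lam 0) / (2 * (lam 1 - lam 0))))
    (μP LP : ℝ)
    (hμP : μP = 2 * ximin * (1 - 4 * (ρq - lam 0) / (lam 1 - lam 0)) *
      (1 - lam 0 / lam 1 - (2 + χP) * (ρq - lam 0) / lam 1))
    (hLP : LP = 2 * ximax * (1 - lam 0 / lam (Fin.last (n+1)) +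
      (χP / lam 1) * (ximin / ximax) * (ρq - lam 0)))
    (hρ1 : lam 0 ≤ ρq) (hρ2 : ρq < lam 0 + (lam 1 - lam 0) / (2 + χP)) :
    0 < μP ∧
    ∀ y ∈ psiMap M q Q '' (Xset A M q),
      (hessPhi B b ρq y - μP • P).PosSemidef ∧
      (LP • P - hessPhi B b ρq y).PosSemidef := by
  have hE : IsPencilEigenbasis A M lam u := ⟨heig, horth⟩
  have hF : IsBlockForm A M q Q B b ρq :=
    ⟨hq1, hQMQ, hQMq, hB, hb, by rw [hρq, Rq, hq1, div_one]⟩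
  have hBpos : B.PosDef := hF.posDef_block hA
  have hξ0 : 0 < ximin := pos_of_mem_pencilSpectrum hBpos hP hximin.1
  have hξ1 : 0 < ximax := pos_of_mem_pencilSpectrum hBpos hP hximax.1
  have hμ : ∀ i ≠ 0, lam 1 ≤ lam i := fun i hi ↦ hmono (Fin.one_le_of_ne_zero hi)
  have hχ : χP = couplingConst (lam 0) (lam 1) * (ximax / ximin) := by
    rw [hχP, couplingConst, mul_right_comm]
  have hχle : couplingConst (lam 0) (lam 1) ≤ χP := hχ ▸
    le_mul_of_one_le_right (couplingConst_nonneg hlam0 hlam01)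
      ((one_le_div hξ0).mpr (hximin.2 hximax.1))
  have hχ4 : 4 ≤ χP := (four_le_couplingConst hlam0 hlam01).trans hχle
  have hρ : (2 + χP) * (ρq - lam 0) < lam 1 - lam 0 :=
    (lt_div_iff₀' (by linarith)).mp (sub_lt_iff_lt_add'.mpr hρ2)
  have hμP' : μP = ximin * curvLower (lam 0) (lam 1) ρq χP := by rw [hμP, curvLower]; ring
  have hLP' : LP = ximax * curvUpper (lam 0) (lam 1) (lam (Fin.last (n + 1))) ρq
      (couplingConst (lam 0) (lam 1)) := by
    rw [hLP, curvUpper, hχ]; field_simp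
  rw [hμP', hLP']
  refine ⟨mul_pos hξ0 (curvLower_pos (hlam0.trans hlam01) hlam01 hρ1 (by linarith) hρ),
    fun y hy ↦ hF.hessPhi_mem_Icc hE hlam0 hlam01 hμ (fun i ↦ hmono (Fin.le_last i))
      hBpos.posSemidef (smul_le_of_mem_lowerBounds_pencilSpectrum hBpos.isHermitian hP hximin.2)
      (le_smul_of_mem_upperBounds_pencilSpectrum hBpos.isHermitian hP hximax.2) hχle hρ
      (hF.phiAux_le_of_mem_image_Xset hE.isSymm_left hE.isSymm_right rfl hy)⟩
end

section
/- Under the condition λ₁ ≤ ρ_q < (λ₁+λ₂)/2, for any x₁, x₂ ∈ X one has x₁ᵀMx₂ ≥ 1 − δ_M > 0, where δ_M = 2(ρ_q − λ₁)/(λ₂ − λ₁) < 1. -/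
open Matrix

/-!
In the `M`-orthonormal coordinates `cᵢ = uᵢᵀMx` the `M`-inner product becomes the Euclidean one and
`xᵀAx` becomes `∑ λᵢcᵢ²`. For a unit vector, `Rq(x) ≤ ρ` then forces `1 - ε ≤ c₁²` with
`ε = (ρ - λ₁)/(λ₂ - λ₁)`, so `x` lies in one of two antipodal spherical caps about `±u₁`.
For `ε < 1/2` the caps have angular radius below `π/4`: vectors in opposite caps have negative
inner product, hence `qᵀMx > 0` puts `x` in the cap of `q`, and two vectors of the same cap have
inner product at least `1 - 2ε`.
-/

section AntipodalCaps

open scoped RealInnerProductSpace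

variable {E : Type*} [SeminormedAddCommGroup E] [InnerProductSpace ℝ E] {e x y z : E} {ε : ℝ}

theorem abs_inner_sub_inner_mul_inner_le (he : ‖e‖ = 1) (x y : E) :
    |⟪x, y⟫ - ⟪e, x⟫ * ⟪e, y⟫| ≤ ((‖x‖ ^ 2 - ⟪e, x⟫ ^ 2) + (‖y‖ ^ 2 - ⟪e, y⟫ ^ 2)) / 2 := by
  have hinner (v w : E) : ⟪v - ⟪e, v⟫ • e, w - ⟪e, w⟫ • e⟫ = ⟪v, w⟫ - ⟪e, v⟫ * ⟪e, w⟫ := by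
    simp only [inner_sub_left, inner_sub_right, real_inner_smul_left, real_inner_smul_right,
      real_inner_self_eq_norm_sq, he, real_inner_comm e v]
    ring
  have hnorm (v : E) : ‖v - ⟪e, v⟫ • e‖ ^ 2 = ‖v‖ ^ 2 - ⟪e, v⟫ ^ 2 := by
    rw [← real_inner_self_eq_norm_sq, hinner, real_inner_self_eq_norm_sq, sq ⟪e, v⟫]
  rw [← hinner, ← hnorm, ← hnorm]
  linarith [abs_real_inner_le_norm (x - ⟪e, x⟫ • e) (y - ⟪e, y⟫ • e),
    two_mul_le_add_sq ‖x - ⟪e, x⟫ • e‖ ‖y - ⟪e, y⟫ • e‖]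

/-- The unit vectors whose angle `θ` with the line spanned by the unit vector `e` satisfies
`sin² θ ≤ ε`: a spherical cap about `e` together with its antipode. -/
def antipodalCaps (e : E) (ε : ℝ) : Set E :=
  {x | ‖x‖ = 1 ∧ 1 - ε ≤ ⟪e, x⟫ ^ 2}

theorem neg_mem_antipodalCaps (hx : x ∈ antipodalCaps e ε) : -x ∈ antipodalCaps e ε := by
  simpa only [antipodalCaps, Set.mem_ofPred_eq, norm_neg, inner_neg_right, neg_sq] using hx

theorem one_sub_two_mul_le_inner_of_inner_mul_inner_nonneg (he : ‖e‖ = 1)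
    (hx : x ∈ antipodalCaps e ε) (hy : y ∈ antipodalCaps e ε) (hxy : 0 ≤ ⟪e, x⟫ * ⟪e, y⟫) :
    1 - 2 * ε ≤ ⟪x, y⟫ := by
  obtain ⟨hx_norm, hx_cap⟩ := hx
  obtain ⟨hy_norm, hy_cap⟩ := hy
  have hproj : 1 - ε ≤ ⟪e, x⟫ * ⟪e, y⟫ := by
    by_contra! hlt
    have hsq : (1 - ε) * (1 - ε) ≤ ⟪e, x⟫ ^ 2 * ⟪e, y⟫ ^ 2 :=
      mul_le_mul hx_cap hy_cap (hxy.trans hlt.le) (sq_nonneg _)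
    exact (mul_self_lt_mul_self hxy hlt).not_ge (hsq.trans_eq (by ring))
  have hdiff := (abs_le.1 (abs_inner_sub_inner_mul_inner_le he x y)).1
  rw [hx_norm, hy_norm] at hdiff
  linarith

theorem inner_mul_inner_pos_of_inner_pos (he : ‖e‖ = 1) (hε : ε < 1 / 2)
    (hx : x ∈ antipodalCaps e ε) (hy : y ∈ antipodalCaps e ε) (hxy : 0 < ⟪x, y⟫) :
    0 < ⟪e, x⟫ * ⟪e, y⟫ := by
  by_contra! hopp
  have hneg : 1 - 2 * ε ≤ ⟪x, -y⟫ :=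
    one_sub_two_mul_le_inner_of_inner_mul_inner_nonneg he hx (neg_mem_antipodalCaps hy)
      (by rw [inner_neg_right]; linarith)
  rw [inner_neg_right] at hneg
  linarith

theorem one_sub_two_mul_le_inner_of_inner_pos (he : ‖e‖ = 1) (hε : ε < 1 / 2)
    (hz : z ∈ antipodalCaps e ε) (hx : x ∈ antipodalCaps e ε) (hy : y ∈ antipodalCaps e ε)
    (hzx : 0 < ⟪z, x⟫) (hzy : 0 < ⟪z, y⟫) : 1 - 2 * ε ≤ ⟪x, y⟫ := by
  have hx_side := inner_mul_inner_pos_of_inner_pos he hε hz hx hzx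
  have hy_side := inner_mul_inner_pos_of_inner_pos he hε hz hy hzy
  refine one_sub_two_mul_le_inner_of_inner_mul_inner_nonneg he hx hy
    (pos_of_mul_pos_right ?_ (sq_nonneg ⟪e, z⟫)).le
  calc 0 < (⟪e, z⟫ * ⟪e, x⟫) * (⟪e, z⟫ * ⟪e, y⟫) := mul_pos hx_side hy_side
    _ = ⟪e, z⟫ ^ 2 * (⟪e, x⟫ * ⟪e, y⟫) := by ring

end AntipodalCaps

section SpectralGap

variable {ι : Type*} [Fintype ι] {lam : ι → ℝ} {i₀ : ι} {μ ρ : ℝ}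

theorem mul_sum_sub_mul_le_sum_of_gap (hμ : ∀ i ≠ i₀, μ ≤ lam i) {w : ι → ℝ}
    (hw : ∀ i ≠ i₀, 0 ≤ w i) :
    μ * ∑ i, w i - (μ - lam i₀) * w i₀ ≤ ∑ i, lam i * w i := by
  classical
  have hrest : ∑ i ∈ Finset.univ.erase i₀, μ * w i ≤ ∑ i ∈ Finset.univ.erase i₀, lam i * w i :=
    Finset.sum_le_sum fun i hi =>
      have hne := Finset.ne_of_mem_erase hi
      mul_le_mul_of_nonneg_right (hμ i hne) (hw i hne)
  rw [Finset.mul_sum, ← Finset.add_sum_erase _ _ (Finset.mem_univ i₀),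
    ← Finset.add_sum_erase _ (fun i => lam i * w i) (Finset.mem_univ i₀)]
  linarith

theorem mem_antipodalCaps_single_of_sum_le [DecidableEq ι] (hgap : lam i₀ < μ)
    (hμ : ∀ i ≠ i₀, μ ≤ lam i) {c : EuclideanSpace ℝ ι} (hc : ‖c‖ = 1)
    (hρ : ∑ i, lam i * c i ^ 2 ≤ ρ) :
    c ∈ antipodalCaps (EuclideanSpace.single i₀ (1 : ℝ)) ((ρ - lam i₀) / (μ - lam i₀)) := by
  have hsum : ∑ i, c i ^ 2 = 1 := by rw [← EuclideanSpace.real_norm_sq_eq, hc, one_pow]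
  have hle := mul_sum_sub_mul_le_sum_of_gap hμ fun i _ => sq_nonneg (c i)
  refine ⟨hc, ?_⟩
  rw [EuclideanSpace.inner_single_left, map_one, one_mul, sub_le_comm,
    le_div_iff₀ (sub_pos.2 hgap)]
  rw [hsum] at hle
  linarith

end SpectralGap

section PencilCoords

variable {ι R : Type*} [Fintype ι] [DecidableEq ι] [CommRing R]

theorem sum_dotProduct_mulVec_smul_eq {M : Matrix ι ι R} {u : ι → ι → R}
    (horth : ∀ i j, u i ⬝ᵥ (M *ᵥ u j) = if i = j then 1 else 0) (x : ι → R) :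
    ∑ i, (u i ⬝ᵥ (M *ᵥ x)) • u i = x := by
  have hU : Matrix.of u * M * (Matrix.of u)ᵀ = 1 := by
    ext i j
    rw [Matrix.mul_assoc, Matrix.one_apply, ← horth i j]
    rfl
  calc ∑ i, (u i ⬝ᵥ (M *ᵥ x)) • u i = (Matrix.of u)ᵀ *ᵥ (Matrix.of u *ᵥ (M *ᵥ x)) := by
        rw [Matrix.mulVec_transpose, Matrix.vecMul_eq_sum]
        rfl
    _ = x := by
        rw [Matrix.mulVec_mulVec, Matrix.mulVec_mulVec, Matrix.mul_assoc, mul_eq_one_comm.1 hU,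
          Matrix.one_mulVec]

theorem dotProduct_mulVec_eq_sum_mul {M : Matrix ι ι R} {u : ι → ι → R}
    (horth : ∀ i j, u i ⬝ᵥ (M *ᵥ u j) = if i = j then 1 else 0) (x y : ι → R) :
    x ⬝ᵥ (M *ᵥ y) = ∑ i, (u i ⬝ᵥ (M *ᵥ x)) * (u i ⬝ᵥ (M *ᵥ y)) := by
  conv_lhs => rw [← sum_dotProduct_mulVec_smul_eq horth x]
  simp only [sum_dotProduct, smul_dotProduct, smul_eq_mul]

theorem dotProduct_mulVec_comm_of_orthonormal {M : Matrix ι ι R} {u : ι → ι → R}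
    (horth : ∀ i j, u i ⬝ᵥ (M *ᵥ u j) = if i = j then 1 else 0) (x y : ι → R) :
    x ⬝ᵥ (M *ᵥ y) = y ⬝ᵥ (M *ᵥ x) := by
  simp only [dotProduct_mulVec_eq_sum_mul horth x, dotProduct_mulVec_eq_sum_mul horth y, mul_comm]

theorem dotProduct_mulVec_self_eq_sum_eigenvalue_mul {A M : Matrix ι ι R} {lam : ι → R}
    {u : ι → ι → R} (heig : ∀ i, A *ᵥ u i = lam i • (M *ᵥ u i))
    (horth : ∀ i j, u i ⬝ᵥ (M *ᵥ u j) = if i = j then 1 else 0) (x : ι → R) :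
    x ⬝ᵥ (A *ᵥ x) = ∑ i, lam i * (u i ⬝ᵥ (M *ᵥ x)) ^ 2 := by
  have hAx : A *ᵥ x = ∑ i, (u i ⬝ᵥ (M *ᵥ x)) • lam i • (M *ᵥ u i) := by
    conv_lhs => rw [← sum_dotProduct_mulVec_smul_eq horth x]
    simp only [Matrix.mulVec_sum, Matrix.mulVec_smul, heig]
  rw [hAx, dotProduct_sum]
  refine Finset.sum_congr rfl fun i _ => ?_
  rw [dotProduct_smul, dotProduct_smul, dotProduct_mulVec_comm_of_orthonormal horth x (u i),
    smul_eq_mul, smul_eq_mul]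
  ring

/-- The coordinates `uᵢᵀMx` of `x` in an `M`-orthonormal basis `u`. They are bundled as a Euclidean
vector so that the `M`-inner product becomes the standard one. -/
noncomputable def pencilCoords (M : Matrix ι ι ℝ) (u : ι → ι → ℝ) (x : ι → ℝ) :
    EuclideanSpace ℝ ι :=
  WithLp.toLp 2 fun i => u i ⬝ᵥ (M *ᵥ x)

theorem inner_pencilCoords {M : Matrix ι ι ℝ} {u : ι → ι → ℝ}
    (horth : ∀ i j, u i ⬝ᵥ (M *ᵥ u j) = if i = j then 1 else 0) (x y : ι → ℝ) :
    inner ℝ (pencilCoords M u x) (pencilCoords M u y) = x ⬝ᵥ (M *ᵥ y) := by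
  rw [dotProduct_mulVec_eq_sum_mul horth, PiLp.inner_apply]
  exact Finset.sum_congr rfl fun i _ => mul_comm _ _

end PencilCoords

section Pencil

variable {n : ℕ} {A M : Matrix (Fin n) (Fin n) ℝ} {lam : Fin n → ℝ} {u : Fin n → Fin n → ℝ}
  {i₀ : Fin n} {μ ρ : ℝ}

theorem pencilCoords_mem_antipodalCaps (heig : ∀ i, A *ᵥ u i = lam i • (M *ᵥ u i))
    (horth : ∀ i j, u i ⬝ᵥ (M *ᵥ u j) = if i = j then 1 else 0)
    (hgap : lam i₀ < μ) (hμ : ∀ i ≠ i₀, μ ≤ lam i) {x : Fin n → ℝ}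
    (hx : x ⬝ᵥ (M *ᵥ x) = 1) (hρ : Rq A M x ≤ ρ) :
    pencilCoords M u x ∈
      antipodalCaps (EuclideanSpace.single i₀ (1 : ℝ)) ((ρ - lam i₀) / (μ - lam i₀)) := by
  refine mem_antipodalCaps_single_of_sum_le hgap hμ ?_ ?_
  · rw [norm_eq_sqrt_real_inner, inner_pencilCoords horth, hx, Real.sqrt_one]
  · rwa [Rq, hx, div_one, dotProduct_mulVec_self_eq_sum_eigenvalue_mul heig horth] at hρ

theorem stmt_5_general (heig : ∀ i, A *ᵥ u i = lam i • (M *ᵥ u i))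
    (horth : ∀ i j, u i ⬝ᵥ (M *ᵥ u j) = if i = j then 1 else 0)
    (hgap : lam i₀ < μ) (hμ : ∀ i ≠ i₀, μ ≤ lam i) {q : Fin n → ℝ} (hq : q ⬝ᵥ (M *ᵥ q) = 1)
    (hρ : Rq A M q < (lam i₀ + μ) / 2) :
    2 * (Rq A M q - lam i₀) / (μ - lam i₀) < 1 ∧
    ∀ x₁ ∈ Xset A M q, ∀ x₂ ∈ Xset A M q,
      1 - 2 * (Rq A M q - lam i₀) / (μ - lam i₀) ≤ x₁ ⬝ᵥ (M *ᵥ x₂) := by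
  have hδ : 2 * (Rq A M q - lam i₀) / (μ - lam i₀) < 1 := by
    rw [div_lt_one (sub_pos.2 hgap)]
    linarith
  refine ⟨hδ, fun x₁ ⟨⟨hx₁, hqx₁⟩, hR₁⟩ x₂ ⟨⟨hx₂, hqx₂⟩, hR₂⟩ => ?_⟩
  rw [mul_div_assoc] at hδ ⊢
  rw [← inner_pencilCoords horth] at hqx₁ hqx₂ ⊢
  have hcap {x : Fin n → ℝ} (hx : x ⬝ᵥ (M *ᵥ x) = 1) (hR : Rq A M x ≤ Rq A M q) :=
    pencilCoords_mem_antipodalCaps heig horth hgap hμ hx hR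
  exact one_sub_two_mul_le_inner_of_inner_pos (by simp) (by linarith) (hcap hq le_rfl)
    (hcap (Real.sqrt_eq_one.1 hx₁) hR₁) (hcap (Real.sqrt_eq_one.1 hx₂) hR₂) hqx₁ hqx₂

end Pencil

/-- Under λ₁ ≤ ρ_q < (λ₁+λ₂)/2, for any x₁, x₂ ∈ X, x₁ᵀMx₂ ≥ 1 − δ_M > 0,
where δ_M = 2(ρ_q − λ₁)/(λ₂ − λ₁) < 1. -/
theorem stmt_5 (n : ℕ)
    (A M : Matrix (Fin (n+2)) (Fin (n+2)) ℝ)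
    (hA : A.PosDef) (hM : M.PosDef)
    (q : Fin (n+2) → ℝ)
    (lam : Fin (n+2) → ℝ) (u : Fin (n+2) → Fin (n+2) → ℝ)
    (hlam0 : 0 < lam 0) (hlam01 : lam 0 < lam 1) (hmono : Monotone lam)
    (heig : ∀ i, A *ᵥ u i = lam i • (M *ᵥ u i))
    (horth : ∀ i j, u i ⬝ᵥ (M *ᵥ u j) = if i = j then (1:ℝ) else 0)
    (hqu1 : 0 < q ⬝ᵥ (M *ᵥ u 0))
    (hq1 : q ⬝ᵥ (M *ᵥ q) = 1)
    (ρq : ℝ) (hρq : ρq = Rq A M q)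
    (hρ1 : lam 0 ≤ ρq) (hρ2 : ρq < (lam 0 + lam 1) / 2)
    (δM : ℝ) (hδM : δM = 2 * (ρq - lam 0) / (lam 1 - lam 0)) :
    δM < 1 ∧ 0 < 1 - δM ∧
    ∀ x₁ ∈ Xset A M q, ∀ x₂ ∈ Xset A M q, 1 - δM ≤ x₁ ⬝ᵥ (M *ᵥ x₂) := by
  subst hρq hδM
  obtain ⟨hδ, hX⟩ := stmt_5_general heig horth hlam01
    (fun i hi => hmono (Fin.one_le_of_ne_zero hi)) hq1 hρ2
  exact ⟨hδ, sub_pos.2 hδ, hX⟩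
end

section
/- Under the condition λ₁ ≤ ρ_q < (λ₁+λ₂)/2, for any y ∈ Y with x = ψ†(y), one has yᵀy/(1 + yᵀy) = 1 − (xᵀMq)² ≤ 2δ_M, and consequently 1 − 2δ_M ≤ 1/(1 + yᵀy) ≤ 1, where δ_M = 2(ρ_q − λ₁)/(λ₂ − λ₁). -/
open Matrix

/-!
Expanding `x` in the `M`-orthonormal eigenbasis, the gap `lam 1 - lam 0` forces every `M`-unit
vector with Rayleigh quotient at most `ρ` to satisfy
`1 - (u₀ᵀMx)² ≤ (ρ - lam 0) / (lam 1 - lam 0)`. This applies to both `q` and `x ∈ X`. The sine of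
the angle between lines is a metric, so `q` and `x` being close to `u₀` makes them close to each
other: `1 - (qᵀMx)² ≤ 4 (ρ - lam 0) / (lam 1 - lam 0)`. Finally, for `y = ψ(x)` the vector
`Qy + q` has squared `M`-norm `1 + yᵀy` and satisfies `xᵀM(Qy + q) = (qᵀMx)(1 + yᵀy)`, so
Cauchy–Schwarz gives `(qᵀMx)² ≤ 1 / (1 + yᵀy)`.
-/

section BilinForm

variable {R E : Type*} [CommRing R] [LinearOrder R] [IsStrictOrderedRing R] [AddCommGroup E]
  [Module R E] {B : LinearMap.BilinForm R E}

theorem apply_sq_le_one_of_isPosSemidef (hB : B.IsPosSemidef) {x y : E}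
    (hx : B x x = 1) (hy : B y y = 1) : B x y ^ 2 ≤ 1 := by
  simpa only [hx, hy, mul_one] using
    B.apply_sq_le_of_symm hB.nonneg (LinearMap.BilinForm.isSymm_iff.1 hB.isSymm) x y

/-- Since `1 - B x y ^ 2 = sin² ∠(x, y)`, this is the squared form of the triangle inequality
`sin ∠(x, y) ≤ sin ∠(x, u) + sin ∠(u, y)`, weakened by `(s + t)² ≤ 2 (s² + t²)`. -/
theorem one_sub_apply_sq_le (hB : B.IsPosSemidef) {x y u : E}
    (hx : B x x = 1) (hy : B y y = 1) (hu : B u u = 1) :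
    1 - B x y ^ 2 ≤ 2 * ((1 - B u x ^ 2) + (1 - B u y ^ 2)) := by
  have hxu : B x u = B u x := hB.eq x u
  have hyu : B y u = B u y := hB.eq y u
  have hyx : B y x = B x y := hB.eq y x
  set a := B u x
  set b := B u y
  -- Parallelogram law for `y - b • u` and `b • (u - a • x)`: the vector below is their difference,
  -- while their sum `y - (a * b) • x` has squared norm `1 - B x y ^ 2 + (B x y - a * b) ^ 2`.
  have hdiff : 0 ≤ 1 - 3 * (a * b) ^ 2 + 2 * (a * b) * B x y := by
    have h := hB.nonneg (y - (2 * b) • u + (a * b) • x)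
    simp only [map_add, map_sub, map_smul, LinearMap.add_apply, LinearMap.sub_apply,
      LinearMap.smul_apply, smul_eq_mul, hx, hy, hu, hxu, hyu, hyx] at h
    linarith
  have hprod : 0 ≤ (1 - a ^ 2) * (1 - b ^ 2) :=
    mul_nonneg (sub_nonneg.2 (apply_sq_le_one_of_isPosSemidef hB hu hx))
      (sub_nonneg.2 (apply_sq_le_one_of_isPosSemidef hB hu hy))
  have hsum : 0 ≤ (B x y - a * b) ^ 2 := sq_nonneg _
  calc 1 - B x y ^ 2 ≤ 2 * (1 - a ^ 2 * b ^ 2) := by linarith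
    _ ≤ 2 * ((1 - a ^ 2) + (1 - b ^ 2)) := by linarith

end BilinForm

theorem isPosSemidef_toBilin' {ι : Type*} [Fintype ι] [DecidableEq ι] {M : Matrix ι ι ℝ}
    (hM : M.PosSemidef) : M.toBilin'.IsPosSemidef where
  eq := (Matrix.isSymm_toBilin'_iff_isSymm.2 (isHermitian_iff_isSymm.1 hM.isHermitian)).eq
  nonneg x := by
    simpa only [Matrix.toBilin'_apply', star_trivial] using hM.dotProduct_mulVec_nonneg x

section Pencil

variable {ι R : Type*} [Fintype ι] [DecidableEq ι] [CommRing R] {A M : Matrix ι ι R}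
  {u : ι → ι → R} {lam : ι → R}

theorem sum_dotProduct_mulVec_smul_eq_self
    (horth : ∀ i j, u i ⬝ᵥ (M *ᵥ u j) = if i = j then 1 else 0) (x : ι → R) :
    ∑ i, (u i ⬝ᵥ (M *ᵥ x)) • u i = x := by
  have hright : Matrix.of u * (M * (Matrix.of u)ᵀ) = 1 := by
    ext i j
    rw [Matrix.one_apply, ← horth i j]
    rfl
  have hleft : (Matrix.of u)ᵀ * (Matrix.of u * M) = 1 :=
    mul_eq_one_comm.1 (by rwa [Matrix.mul_assoc])
  calc ∑ i, (u i ⬝ᵥ (M *ᵥ x)) • u i = (Matrix.of u)ᵀ *ᵥ (Matrix.of u *ᵥ (M *ᵥ x)) := by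
        rw [mulVec_transpose, vecMul_eq_sum]
        rfl
    _ = x := by rw [mulVec_mulVec, mulVec_mulVec, Matrix.mul_assoc, hleft, one_mulVec]

theorem dotProduct_mulVec_eq_sum_eigenvalue_mul_sq (hM : M.IsSymm)
    (heig : ∀ i, A *ᵥ u i = lam i • (M *ᵥ u i))
    (horth : ∀ i j, u i ⬝ᵥ (M *ᵥ u j) = if i = j then 1 else 0) (x : ι → R) :
    x ⬝ᵥ (A *ᵥ x) = ∑ i, lam i * (u i ⬝ᵥ (M *ᵥ x)) ^ 2 := by
  have hsymm (i : ι) : x ⬝ᵥ (M *ᵥ u i) = u i ⬝ᵥ (M *ᵥ x) := by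
    rw [← dotProduct_transpose_mulVec, hM]
  calc x ⬝ᵥ (A *ᵥ x) = x ⬝ᵥ (A *ᵥ ∑ i, (u i ⬝ᵥ (M *ᵥ x)) • u i) := by
        rw [sum_dotProduct_mulVec_smul_eq_self horth]
    _ = ∑ i, lam i * (u i ⬝ᵥ (M *ᵥ x)) ^ 2 := by
        simp only [mulVec_sum, mulVec_smul, heig, dotProduct_sum, dotProduct_smul, smul_eq_mul,
          hsymm]
        exact Finset.sum_congr rfl fun i _ => by ring

variable [LinearOrder R] [IsStrictOrderedRing R]

theorem spectralGap_mul_sub_sq_le (hM : M.IsSymm) (heig : ∀ i, A *ᵥ u i = lam i • (M *ᵥ u i))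
    (horth : ∀ i j, u i ⬝ᵥ (M *ᵥ u j) = if i = j then 1 else 0)
    {k : ι} {μ : R} (hμ : ∀ i ≠ k, μ ≤ lam i) (x : ι → R) :
    (μ - lam k) * (x ⬝ᵥ (M *ᵥ x) - (u k ⬝ᵥ (M *ᵥ x)) ^ 2) ≤
      x ⬝ᵥ (A *ᵥ x) - lam k * (x ⬝ᵥ (M *ᵥ x)) := by
  have hMx : x ⬝ᵥ (M *ᵥ x) = ∑ i, (u i ⬝ᵥ (M *ᵥ x)) ^ 2 := by
    simpa only [one_mul] using
      dotProduct_mulVec_eq_sum_eigenvalue_mul_sq (lam := fun _ => 1) hM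
        (fun i => (one_smul R _).symm) horth x
  have htail : ∑ i ∈ Finset.univ.erase k, μ * (u i ⬝ᵥ (M *ᵥ x)) ^ 2 ≤
      ∑ i ∈ Finset.univ.erase k, lam i * (u i ⬝ᵥ (M *ᵥ x)) ^ 2 :=
    Finset.sum_le_sum fun i hi =>
      mul_le_mul_of_nonneg_right (hμ i (Finset.ne_of_mem_erase hi)) (sq_nonneg _)
  rw [← Finset.mul_sum] at htail
  rw [dotProduct_mulVec_eq_sum_eigenvalue_mul_sq hM heig horth x, hMx,
    ← Finset.add_sum_erase _ _ (Finset.mem_univ k), ← Finset.add_sum_erase _ _ (Finset.mem_univ k)]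
  linarith

end Pencil

section RayleighQuotient

variable {n : ℕ} {A M : Matrix (Fin n) (Fin n) ℝ} {u : Fin n → Fin n → ℝ} {lam : Fin n → ℝ}
  {k : Fin n} {μ ρ : ℝ}

theorem one_sub_eigenvector_dotProduct_sq_le_of_rq_le (hM : M.IsSymm)
    (heig : ∀ i, A *ᵥ u i = lam i • (M *ᵥ u i))
    (horth : ∀ i j, u i ⬝ᵥ (M *ᵥ u j) = if i = j then 1 else 0)
    (hgap : lam k < μ) (hμ : ∀ i ≠ k, μ ≤ lam i) {x : Fin n → ℝ}
    (hx : x ⬝ᵥ (M *ᵥ x) = 1) (hρ : Rq A M x ≤ ρ) :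
    1 - (u k ⬝ᵥ (M *ᵥ x)) ^ 2 ≤ (ρ - lam k) / (μ - lam k) := by
  have h := spectralGap_mul_sub_sq_le hM heig horth hμ x
  rw [Rq, hx, div_one] at hρ
  rw [hx] at h
  rw [le_div_iff₀' (sub_pos.2 hgap)]
  linarith

theorem one_sub_dotProduct_mulVec_sq_le_of_rq_le (hM : M.PosSemidef)
    (heig : ∀ i, A *ᵥ u i = lam i • (M *ᵥ u i))
    (horth : ∀ i j, u i ⬝ᵥ (M *ᵥ u j) = if i = j then 1 else 0)
    (hgap : lam k < μ) (hμ : ∀ i ≠ k, μ ≤ lam i) {x z : Fin n → ℝ}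
    (hx : x ⬝ᵥ (M *ᵥ x) = 1) (hz : z ⬝ᵥ (M *ᵥ z) = 1)
    (hxρ : Rq A M x ≤ ρ) (hzρ : Rq A M z ≤ ρ) :
    1 - (x ⬝ᵥ (M *ᵥ z)) ^ 2 ≤ 4 * ((ρ - lam k) / (μ - lam k)) := by
  have huk : u k ⬝ᵥ (M *ᵥ u k) = 1 := by rw [horth, if_pos rfl]
  have hsin : 1 - (x ⬝ᵥ (M *ᵥ z)) ^ 2 ≤
      2 * ((1 - (u k ⬝ᵥ (M *ᵥ x)) ^ 2) + (1 - (u k ⬝ᵥ (M *ᵥ z)) ^ 2)) := by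
    rw [← Matrix.toBilin'_apply'] at hx hz huk
    simpa only [Matrix.toBilin'_apply'] using
      one_sub_apply_sq_le (isPosSemidef_toBilin' hM) hx hz huk
  have hsymm : M.IsSymm := isHermitian_iff_isSymm.1 hM.isHermitian
  have hxu := one_sub_eigenvector_dotProduct_sq_le_of_rq_le hsymm heig horth hgap hμ hx hxρ
  have hzu := one_sub_eigenvector_dotProduct_sq_le_of_rq_le hsymm heig horth hgap hμ hz hzρ
  linarith

end RayleighQuotient

section OrthonormalFrame

variable {ι κ R : Type*} [Fintype ι] [Fintype κ] [CommRing R]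

theorem mulVec_dotProduct_mulVec {ι' : Type*} [Fintype ι'] (M : Matrix ι ι' R)
    (Q : Matrix ι κ R) (y : κ → R) (x : ι' → R) :
    (Q *ᵥ y) ⬝ᵥ (M *ᵥ x) = y ⬝ᵥ ((Qᵀ * M) *ᵥ x) := by
  rw [← mulVec_mulVec, dotProduct_mulVec y, vecMul_transpose]

variable {M : Matrix ι ι R} {q : ι → R} {Q : Matrix ι κ R}

theorem mulVec_add_dotProduct_mulVec_eq_one (hq : q ⬝ᵥ (M *ᵥ q) = 1)
    (hQq : (Qᵀ * M) *ᵥ q = 0) (y : κ → R) : (Q *ᵥ y + q) ⬝ᵥ (M *ᵥ q) = 1 := by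
  rw [add_dotProduct, mulVec_dotProduct_mulVec, hQq, dotProduct_zero, hq, zero_add]

theorem mulVec_add_dotProduct_mulVec_self [DecidableEq κ] (hM : M.IsSymm)
    (hq : q ⬝ᵥ (M *ᵥ q) = 1) (hQ : Qᵀ * M * Q = 1) (hQq : (Qᵀ * M) *ᵥ q = 0) (y : κ → R) :
    (Q *ᵥ y + q) ⬝ᵥ (M *ᵥ (Q *ᵥ y + q)) = 1 + y ⬝ᵥ y := by
  have hqQ : q ⬝ᵥ (M *ᵥ (Q *ᵥ y)) = 0 := by
    rw [← dotProduct_transpose_mulVec, hM, mulVec_dotProduct_mulVec, hQq, dotProduct_zero]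
  rw [mulVec_add, dotProduct_add, mulVec_add_dotProduct_mulVec_eq_one hq hQq, add_dotProduct,
    hqQ, mulVec_dotProduct_mulVec, mulVec_mulVec, hQ, one_mulVec, add_zero, add_comm]

end OrthonormalFrame

section Chart

variable {n m : ℕ} {M : Matrix (Fin n) (Fin n) ℝ} {q : Fin n → ℝ} {Q : Matrix (Fin n) (Fin m) ℝ}

theorem psiDag_dotProduct_mulVec_sq (hM : M.IsSymm) (hq : q ⬝ᵥ (M *ᵥ q) = 1)
    (hQ : Qᵀ * M * Q = 1) (hQq : (Qᵀ * M) *ᵥ q = 0) (y : Fin m → ℝ) :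
    (psiDag M q Q y ⬝ᵥ (M *ᵥ q)) ^ 2 = 1 / (1 + y ⬝ᵥ y) := by
  have hy : 0 ≤ y ⬝ᵥ y := dotProduct_star_self_nonneg y
  rw [psiDag, smul_dotProduct, mulVec_add_dotProduct_mulVec_eq_one hq hQq, Mnorm,
    mulVec_add_dotProduct_mulVec_self hM hq hQ hQq, smul_eq_mul, mul_one, inv_pow,
    Real.sq_sqrt (by positivity), one_div]

theorem mulVec_psiMap_add_dotProduct_mulVec {x : Fin n → ℝ} (hx : q ⬝ᵥ (M *ᵥ x) ≠ 0) :
    (Q *ᵥ psiMap M q Q x + q) ⬝ᵥ (M *ᵥ x) =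
      (q ⬝ᵥ (M *ᵥ x)) * (1 + psiMap M q Q x ⬝ᵥ psiMap M q Q x) := by
  have hpsi : (Qᵀ * M) *ᵥ x = (q ⬝ᵥ (M *ᵥ x)) • psiMap M q Q x := by
    rw [psiMap, smul_inv_smul₀ hx]
  rw [add_dotProduct, mulVec_dotProduct_mulVec, hpsi, dotProduct_smul, smul_eq_mul]
  ring

theorem dotProduct_mulVec_sq_le_one_div_one_add_psiMap (hM : M.PosSemidef)
    (hq : q ⬝ᵥ (M *ᵥ q) = 1) (hQ : Qᵀ * M * Q = 1) (hQq : (Qᵀ * M) *ᵥ q = 0)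
    {x : Fin n → ℝ} (hx : x ⬝ᵥ (M *ᵥ x) = 1) (hqx : q ⬝ᵥ (M *ᵥ x) ≠ 0) :
    (q ⬝ᵥ (M *ᵥ x)) ^ 2 ≤ 1 / (1 + psiMap M q Q x ⬝ᵥ psiMap M q Q x) := by
  set y := psiMap M q Q x with hy_def
  have hy : 0 ≤ y ⬝ᵥ y := dotProduct_star_self_nonneg y
  have hcs : ((q ⬝ᵥ (M *ᵥ x)) * (1 + y ⬝ᵥ y)) ^ 2 ≤ 1 + y ⬝ᵥ y := by
    have hB := isPosSemidef_toBilin' hM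
    have h := M.toBilin'.apply_sq_le_of_symm hB.nonneg
      (LinearMap.BilinForm.isSymm_iff.1 hB.isSymm) (Q *ᵥ y + q) x
    rwa [Matrix.toBilin'_apply', Matrix.toBilin'_apply', Matrix.toBilin'_apply', hx, mul_one,
      mulVec_add_dotProduct_mulVec_self (isHermitian_iff_isSymm.1 hM.isHermitian) hq hQ hQq,
      hy_def, mulVec_psiMap_add_dotProduct_mulVec hqx] at h
  have hpos : 0 < 1 + y ⬝ᵥ y := by positivity
  rw [le_div_iff₀ hpos]
  exact le_of_mul_le_mul_right (by linarith) hpos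

end Chart

theorem stmt_6_general {n m : ℕ} {A M : Matrix (Fin n) (Fin n) ℝ} (hM : M.PosSemidef)
    {q : Fin n → ℝ} {Q : Matrix (Fin n) (Fin m) ℝ} (hq : q ⬝ᵥ (M *ᵥ q) = 1)
    (hQ : Qᵀ * M * Q = 1) (hQq : (Qᵀ * M) *ᵥ q = 0)
    {lam : Fin n → ℝ} {u : Fin n → Fin n → ℝ} (heig : ∀ i, A *ᵥ u i = lam i • (M *ᵥ u i))
    (horth : ∀ i j, u i ⬝ᵥ (M *ᵥ u j) = if i = j then (1 : ℝ) else 0)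
    {k : Fin n} {μ : ℝ} (hgap : lam k < μ) (hμ : ∀ i ≠ k, μ ≤ lam i)
    {δM : ℝ} (hδM : δM = 2 * (Rq A M q - lam k) / (μ - lam k)) :
    ∀ y ∈ psiMap M q Q '' (Xset A M q),
      (y ⬝ᵥ y) / (1 + y ⬝ᵥ y) = 1 - (psiDag M q Q y ⬝ᵥ (M *ᵥ q)) ^ 2 ∧
      (y ⬝ᵥ y) / (1 + y ⬝ᵥ y) ≤ 2 * δM ∧
      1 - 2 * δM ≤ 1 / (1 + y ⬝ᵥ y) ∧
      1 / (1 + y ⬝ᵥ y) ≤ 1 := by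
  rintro y ⟨x, ⟨⟨hnorm, hqx⟩, hRq⟩, rfl⟩
  have hx : x ⬝ᵥ (M *ᵥ x) = 1 := Real.sqrt_eq_one.1 hnorm
  have hangle : 1 - (q ⬝ᵥ (M *ᵥ x)) ^ 2 ≤ 2 * δM :=
    calc 1 - (q ⬝ᵥ (M *ᵥ x)) ^ 2 ≤ 4 * ((Rq A M q - lam k) / (μ - lam k)) :=
          one_sub_dotProduct_mulVec_sq_le_of_rq_le hM heig horth hgap hμ hq hx le_rfl hRq
      _ = 2 * δM := by rw [hδM]; ring
  have hchart := dotProduct_mulVec_sq_le_one_div_one_add_psiMap hM hq hQ hQq hx hqx.ne'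
  rw [psiDag_dotProduct_mulVec_sq (isHermitian_iff_isSymm.1 hM.isHermitian) hq hQ hQq]
  set y := psiMap M q Q x
  have hy : 0 ≤ y ⬝ᵥ y := dotProduct_star_self_nonneg y
  have hsub : (y ⬝ᵥ y) / (1 + y ⬝ᵥ y) = 1 - 1 / (1 + y ⬝ᵥ y) := by
    field_simp
    ring
  have hle : 1 / (1 + y ⬝ᵥ y) ≤ 1 := div_le_one_of_le₀ (by linarith) (by positivity)
  exact ⟨hsub, by linarith, by linarith, hle⟩

/-- Under λ₁ ≤ ρ_q < (λ₁+λ₂)/2, for y ∈ Y with x = ψ†(y):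
yᵀy/(1+yᵀy) = 1 − (xᵀMq)² ≤ 2δ_M, and 1 − 2δ_M ≤ 1/(1+yᵀy) ≤ 1. -/
theorem stmt_6 (n : ℕ)
    (A M : Matrix (Fin (n+2)) (Fin (n+2)) ℝ)
    (hA : A.PosDef) (hM : M.PosDef)
    (q : Fin (n+2) → ℝ) (Q : Matrix (Fin (n+2)) (Fin (n+1)) ℝ)
    (hq1 : q ⬝ᵥ (M *ᵥ q) = 1)
    (hQMQ : Qᵀ * M * Q = 1)
    (hQMq : (Qᵀ * M) *ᵥ q = 0)
    (lam : Fin (n+2) → ℝ) (u : Fin (n+2) → Fin (n+2) → ℝ)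
    (hlam0 : 0 < lam 0) (hlam01 : lam 0 < lam 1) (hmono : Monotone lam)
    (heig : ∀ i, A *ᵥ u i = lam i • (M *ᵥ u i))
    (horth : ∀ i j, u i ⬝ᵥ (M *ᵥ u j) = if i = j then (1:ℝ) else 0)
    (hqu1 : 0 < q ⬝ᵥ (M *ᵥ u 0))
    (ρq : ℝ) (hρq : ρq = Rq A M q)
    (hρ1 : lam 0 ≤ ρq) (hρ2 : ρq < (lam 0 + lam 1) / 2)
    (δM : ℝ) (hδM : δM = 2 * (ρq - lam 0) / (lam 1 - lam 0)) :
    ∀ y ∈ psiMap M q Q '' (Xset A M q),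
      (y ⬝ᵥ y) / (1 + y ⬝ᵥ y) = 1 - (psiDag M q Q y ⬝ᵥ (M *ᵥ q)) ^ 2 ∧
      (y ⬝ᵥ y) / (1 + y ⬝ᵥ y) ≤ 2 * δM ∧
      1 - 2 * δM ≤ 1 / (1 + y ⬝ᵥ y) ∧
      1 / (1 + y ⬝ᵥ y) ≤ 1 := by
  subst hρq
  exact stmt_6_general hM.posSemidef hq1 hQMQ hQMq heig horth hlam01
    (fun i hi => hmono (Fin.one_le_of_ne_zero hi)) hδM
end

section
/- Under the condition λ₁ ≤ ρ_q < λ₂, for any x ∈ X with ρ = Rq(x), the gradient of the Rayleigh quotient satisfies ‖∇Rq(x)‖²_{A⁻¹} ≤ 4ρ(ρ − λ₁)/λ₁, where ∇Rq(x) = 2(Ax − ρMx) and ‖v‖²_{A⁻¹} = vᵀA⁻¹v. -/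
open Matrix

/-!
The smallest eigenvalue `λ₁` gives the Loewner bound `λ₁ M ≤ A`. With `z = A⁻¹Mx`, expanding
`0 ≤ ‖x - λ₁ z‖²_M` and using `λ₁ zᵀMz ≤ zᵀAz = (Mx)ᵀA⁻¹(Mx)` inverts it to
`(Mx)ᵀA⁻¹(Mx) ≤ xᵀMx / λ₁`. If `xᵀMx = 1` and `ρ = xᵀAx`, then
`‖Ax - ρMx‖²_{A⁻¹} = ρ² (Mx)ᵀA⁻¹(Mx) - ρ ≤ ρ² / λ₁ - ρ = ρ (ρ - λ₁) / λ₁`.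
-/

section EigenvalueBound

variable {ι R : Type*} [Fintype ι] [DecidableEq ι]

theorem of_mul_sub_smul_mul_transpose_eq_diagonal [CommRing R] {A M : Matrix ι ι R}
    {lam : ι → R} {u : ι → ι → R}
    (heig : ∀ i, A *ᵥ u i = lam i • (M *ᵥ u i))
    (horth : ∀ i j, u i ⬝ᵥ (M *ᵥ u j) = if i = j then (1 : R) else 0) (μ : R) :
    of u * (A - μ • M) * (of u)ᵀ = diagonal fun i => lam i - μ := by
  ext i j
  calc (of u * (A - μ • M) * (of u)ᵀ) i j = u i ⬝ᵥ ((A - μ • M) *ᵥ u j) := mul_mul_apply ..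
    _ = (lam j - μ) * (u i ⬝ᵥ (M *ᵥ u j)) := by
      rw [sub_mulVec, smul_mulVec, heig, ← sub_smul, dotProduct_smul, smul_eq_mul]
    _ = diagonal (fun i => lam i - μ) i j := by
      rw [horth, diagonal_apply]
      split_ifs with hij <;> simp [hij]

theorem isUnit_of_orthonormal_rows [CommRing R] {M : Matrix ι ι R} {u : ι → ι → R}
    (horth : ∀ i j, u i ⬝ᵥ (M *ᵥ u j) = if i = j then (1 : R) else 0) : IsUnit (of u) := by
  have hone : of u * (M * (of u)ᵀ) = 1 := by
    ext i j
    rw [← Matrix.mul_assoc, one_apply, ← horth]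
    exact mul_mul_apply ..
  exact IsUnit.of_mul_eq_one _ hone

theorem posSemidef_sub_smul_of_forall_le_eigenvalue {A M : Matrix ι ι ℝ} {lam : ι → ℝ}
    {u : ι → ι → ℝ}
    (heig : ∀ i, A *ᵥ u i = lam i • (M *ᵥ u i))
    (horth : ∀ i j, u i ⬝ᵥ (M *ᵥ u j) = if i = j then (1 : ℝ) else 0)
    {μ : ℝ} (hμ : ∀ i, μ ≤ lam i) : (A - μ • M).PosSemidef := by
  rw [← (isUnit_of_orthonormal_rows horth).posSemidef_star_right_conjugate_iff,
    star_eq_conjTranspose, conjTranspose_eq_transpose_of_trivial,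
    of_mul_sub_smul_mul_transpose_eq_diagonal heig horth, posSemidef_diagonal_iff]
  exact fun i => sub_nonneg.mpr (hμ i)

end EigenvalueBound

section InverseForm

variable {ι R : Type*} [Fintype ι]

theorem mulVec_dotProduct_of_isSymm [NonUnitalCommSemiring R] {A : Matrix ι ι R} (hA : A.IsSymm)
    (x y : ι → R) : (A *ᵥ x) ⬝ᵥ y = x ⬝ᵥ (A *ᵥ y) := by
  rw [dotProduct_mulVec, ← mulVec_transpose, hA.eq]

variable [DecidableEq ι]

theorem mulVec_sub_dotProduct_inv_mulVec_self [CommRing R] {A : Matrix ι ι R}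
    (hA : A.IsSymm) (hdet : IsUnit A.det) (x b : ι → R) :
    (A *ᵥ x - b) ⬝ᵥ (A⁻¹ *ᵥ (A *ᵥ x - b)) =
      x ⬝ᵥ (A *ᵥ x) - 2 * (x ⬝ᵥ b) + b ⬝ᵥ (A⁻¹ *ᵥ b) := by
  have hinv_A : A⁻¹ *ᵥ (A *ᵥ x) = x := by
    rw [mulVec_mulVec, nonsing_inv_mul A hdet, one_mulVec]
  have hA_inv : A *ᵥ (A⁻¹ *ᵥ b) = b := by
    rw [mulVec_mulVec, mul_nonsing_inv A hdet, one_mulVec]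
  simp only [mulVec_sub, hinv_A, sub_dotProduct, dotProduct_sub,
    mulVec_dotProduct_of_isSymm hA, hA_inv, dotProduct_comm b x]
  ring

theorem mulVec_dotProduct_inv_mulVec_le_div {A M : Matrix ι ι ℝ} (hdet : IsUnit A.det)
    (hM : M.PosSemidef) {μ : ℝ} (hμ : 0 < μ) (hAM : (A - μ • M).PosSemidef) (x : ι → ℝ) :
    (M *ᵥ x) ⬝ᵥ (A⁻¹ *ᵥ (M *ᵥ x)) ≤ x ⬝ᵥ (M *ᵥ x) / μ := by
  have hMsymm : M.IsSymm := isHermitian_iff_isSymm.mp hM.isHermitian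
  set z := A⁻¹ *ᵥ (M *ᵥ x) with hz
  have hAz : A *ᵥ z = M *ᵥ x := by
    rw [hz, mulVec_mulVec, mul_nonsing_inv A hdet, one_mulVec]
  have hzMx : z ⬝ᵥ (M *ᵥ x) = (M *ᵥ x) ⬝ᵥ z := dotProduct_comm ..
  have hxMz : x ⬝ᵥ (M *ᵥ z) = (M *ᵥ x) ⬝ᵥ z := (mulVec_dotProduct_of_isSymm hMsymm x z).symm
  have hloewner : μ * (z ⬝ᵥ (M *ᵥ z)) ≤ (M *ᵥ x) ⬝ᵥ z := by
    have hnonneg := hAM.dotProduct_mulVec_nonneg z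
    simp only [star_trivial, sub_mulVec, smul_mulVec, dotProduct_sub, dotProduct_smul,
      smul_eq_mul, hAz, hzMx] at hnonneg
    exact sub_nonneg.mp hnonneg
  have hsquare : 0 ≤ x ⬝ᵥ (M *ᵥ x) - 2 * μ * ((M *ᵥ x) ⬝ᵥ z) + μ * (μ * (z ⬝ᵥ (M *ᵥ z))) := by
    have hnonneg := hM.dotProduct_mulVec_nonneg (x - μ • z)
    simp only [star_trivial, mulVec_sub, mulVec_smul, sub_dotProduct, dotProduct_sub,
      smul_dotProduct, dotProduct_smul, smul_eq_mul, hxMz, hzMx] at hnonneg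
    linarith
  rw [le_div_iff₀ hμ]
  linarith [mul_le_mul_of_nonneg_left hloewner hμ.le]

end InverseForm

theorem stmt_8_general {n : ℕ} {A M : Matrix (Fin n) (Fin n) ℝ} (hA : A.PosDef)
    (hM : M.PosSemidef) {μ : ℝ} (hμ : 0 < μ) (hAM : (A - μ • M).PosSemidef)
    {x : Fin n → ℝ} (hx : Mnorm M x = 1) :
    ((2 : ℝ) • (A *ᵥ x - Rq A M x • (M *ᵥ x))) ⬝ᵥ
        (A⁻¹ *ᵥ ((2 : ℝ) • (A *ᵥ x - Rq A M x • (M *ᵥ x)))) ≤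
      4 * Rq A M x * (Rq A M x - μ) / μ := by
  have hxMx : x ⬝ᵥ (M *ᵥ x) = 1 := Real.sqrt_eq_one.mp hx
  have hxAx : x ⬝ᵥ (A *ᵥ x) = Rq A M x := by rw [Rq, hxMx, div_one]
  have hdet : IsUnit A.det := hA.det_pos.ne'.isUnit
  set ρ := Rq A M x
  have hbound : (M *ᵥ x) ⬝ᵥ (A⁻¹ *ᵥ (M *ᵥ x)) ≤ 1 / μ :=
    hxMx ▸ mulVec_dotProduct_inv_mulVec_le_div hdet hM hμ hAM x
  have hresidual : (A *ᵥ x - ρ • (M *ᵥ x)) ⬝ᵥ (A⁻¹ *ᵥ (A *ᵥ x - ρ • (M *ᵥ x))) =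
      ρ ^ 2 * ((M *ᵥ x) ⬝ᵥ (A⁻¹ *ᵥ (M *ᵥ x))) - ρ := by
    rw [mulVec_sub_dotProduct_inv_mulVec_self
      (isHermitian_iff_isSymm.mp hA.isHermitian) hdet]
    simp only [mulVec_smul, dotProduct_smul, smul_dotProduct, smul_eq_mul, hxMx, hxAx]
    ring
  calc _ = 4 * (ρ ^ 2 * ((M *ᵥ x) ⬝ᵥ (A⁻¹ *ᵥ (M *ᵥ x))) - ρ) := by
        rw [← hresidual, mulVec_smul, smul_dotProduct, dotProduct_smul, smul_eq_mul, smul_eq_mul]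
        ring
    _ ≤ 4 * (ρ ^ 2 * (1 / μ) - ρ) := by gcongr
    _ = 4 * ρ * (ρ - μ) / μ := by field_simp

/-- Under λ₁ ≤ ρ_q < λ₂, for any x ∈ X with ρ = Rq(x):
‖∇Rq(x)‖²_{A⁻¹} ≤ 4ρ(ρ − λ₁)/λ₁, where ∇Rq(x) = 2(Ax − ρMx). -/
theorem stmt_8 (n : ℕ)
    (A M : Matrix (Fin (n+2)) (Fin (n+2)) ℝ)
    (hA : A.PosDef) (hM : M.PosDef)
    (q : Fin (n+2) → ℝ)
    (lam : Fin (n+2) → ℝ) (u : Fin (n+2) → Fin (n+2) → ℝ)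
    (hlam0 : 0 < lam 0) (hlam01 : lam 0 < lam 1) (hmono : Monotone lam)
    (heig : ∀ i, A *ᵥ u i = lam i • (M *ᵥ u i))
    (horth : ∀ i j, u i ⬝ᵥ (M *ᵥ u j) = if i = j then (1:ℝ) else 0)
    (hqu1 : 0 < q ⬝ᵥ (M *ᵥ u 0))
    (hq1 : q ⬝ᵥ (M *ᵥ q) = 1)
    (ρq : ℝ) (hρq : ρq = Rq A M q)
    (hρ1 : lam 0 ≤ ρq) (hρ2 : ρq < lam 1) :
    ∀ x ∈ Xset A M q,
      ((2 : ℝ) • (A *ᵥ x - Rq A M x • (M *ᵥ x))) ⬝ᵥ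
          (A⁻¹ *ᵥ ((2 : ℝ) • (A *ᵥ x - Rq A M x • (M *ᵥ x)))) ≤
        4 * Rq A M x * (Rq A M x - lam 0) / lam 0 :=
  fun _ hx =>
    stmt_8_general hA hM.posSemidef hlam0
      (posSemidef_sub_smul_of_forall_le_eigenvalue heig horth fun i => hmono (Fin.zero_le i)) hx.1.1
end
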